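/- arXiv:2305.04781 — 4 statements merged into one kernel-verified Lean document; each statement's English description precedes it below -/
import Mathlib

section
/- Let n ≥ 2 be an integer and let φ ∈ ℤ[x] be a monic polynomial whose reduction modulo p is irreducible in 𝔽_p[x] for every prime p ≤ n. Let a_0(x), a_1(x), …, a_{n−1}(x) ∈ ℤ[x] be polynomials each of degree strictly less than deg φ, and let a_n be an integer. Assume that a_n is coprime to n! and that the content of a_0(x) is coprime to n! (in particular a_0(x) ≠ 0). Then the polynomial Σ_{i=0}^{n−1} (n!/i!)·a_i(x)·φ(x)^i + a_n·φ(x)^n is irreducible in ℚ[x] (equivalently, Σ_{i=0}^{n−1} a_i(x)·φ(x)^i/i! + a_n·φ(x)^n/n! is irreducible over ℚ). -/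
open Polynomial

/-!
Write `F` for the polynomial and suppose `F = G * H` over `ℤ`. Modulo a prime `q ∣ n` only the
term `φ ^ n` survives, so `deg G = k * deg φ` for some `k`; by symmetry `2 * k ≤ n`. If `0 < k`,
Sylvester's theorem gives a prime `p > k` dividing `n.choose k`. Then `p ∣ n! / i!` for all
`i ≤ n - k`, so `φ ^ (n - k + 1)` divides `F` modulo `p`, which is too much for `H` alone: `φ ∣ G`
modulo `p`.

Let `θ` be a root of `φ`. As `φ` is irreducible modulo `p`, the number `p` is prime in `ℤ[θ]`.
Expand everything in powers of `X - θ`. Because `v_p(i!) < i / k`, the lower Newton polygon of `F`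
at `p` leaves its first vertex with slope greater than `-1 / k`, and this passes to the factor `G`.
The constant term of `G` is divisible by `p`, hence so are its first `k + 1` coefficients, i.e.
`φ ^ (k + 1) ∣ G` modulo `p`, contradicting `deg G = k * deg φ`.

Sylvester's theorem follows Erdős: if all primes dividing `n.choose k` are at most `k`, each
contributes at most `n` to it, and those above `√n` contribute at most one factor, bounded together
through the primorial. This is incompatible with the growth of `n.choose k` except for `k < 1024`
and `n < 16 * k`. In that range there is a prime in `(n - k, n]` if `14 ≤ k`, and finitely many `n`
are left if `k < 14`.
-/

namespace SchurExtension

section Binomial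

open Nat Finset

variable {n k p : ℕ}

theorem pow_le_pow_mul_choose (hkn : k ≤ n) : n ^ k ≤ k ^ k * n.choose k := by
  induction k generalizing n with
  | zero => simp
  | succ k ih =>
    obtain ⟨m, rfl⟩ : ∃ m, n = m + 1 := ⟨n - 1, by lia⟩
    have hkm : k ≤ m := by lia
    have ratio : (m + 1) ^ k * k ^ k ≤ (k + 1) ^ k * m ^ k := by
      rw [← mul_pow, ← mul_pow]
      exact Nat.pow_le_pow_left (by nlinarith) k
    have step : (m + 1) ^ k ≤ (k + 1) ^ k * m.choose k := by
      refine Nat.le_of_mul_le_mul_right (c := k ^ k) ?_ (by rcases k with _ | k <;> positivity)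
      calc (m + 1) ^ k * k ^ k ≤ (k + 1) ^ k * m ^ k := ratio
        _ ≤ (k + 1) ^ k * (k ^ k * m.choose k) := by gcongr; exact ih hkm
        _ = (k + 1) ^ k * m.choose k * k ^ k := by ring
    calc (m + 1) ^ (k + 1) ≤ (m + 1) * ((k + 1) ^ k * m.choose k) := by
          rw [pow_succ']; gcongr
      _ = (k + 1) ^ k * ((m + 1) * m.choose k) := by ring
      _ = (k + 1) ^ (k + 1) * (m + 1).choose (k + 1) := by
          rw [Nat.add_one_mul_choose_eq]; ring

theorem three_mul_choose_le {m : ℕ} (h : m < 3 * k) :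
    3 * m.choose k ≤ 2 * (m + 1).choose k := by
  rcases lt_or_ge m k with hmk | hkm
  · simp [Nat.choose_eq_zero_of_lt hmk]
  refine Nat.le_of_mul_le_mul_right (c := m + 1 - k) ?_ (by lia)
  calc 3 * m.choose k * (m + 1 - k) = m.choose k * (3 * (m + 1 - k)) := by ring
    _ ≤ m.choose k * (2 * (m + 1)) := Nat.mul_le_mul_left _ (by lia)
    _ = 2 * (m + 1).choose k * (m + 1 - k) := by
        rw [mul_left_comm, Nat.choose_mul_succ_eq, mul_assoc]

theorem four_pow_mul_three_pow_le (hk : 0 < k) {j : ℕ} (hj : j ≤ k) :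
    4 ^ k * 3 ^ j ≤ 2 * k * (2 * k + j).choose k * 2 ^ j := by
  induction j with
  | zero => simpa [Nat.centralBinom] using Nat.four_pow_le_two_mul_self_mul_centralBinom k hk
  | succ j ih =>
    calc 4 ^ k * 3 ^ (j + 1) = 4 ^ k * 3 ^ j * 3 := by ring
      _ ≤ 2 * k * (2 * k + j).choose k * 2 ^ j * 3 := Nat.mul_le_mul_right _ (ih (by lia))
      _ = 2 * k * 2 ^ j * (3 * (2 * k + j).choose k) := by ring
      _ ≤ 2 * k * 2 ^ j * (2 * (2 * k + j + 1).choose k) :=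
          Nat.mul_le_mul_left _ (three_mul_choose_le (by lia))
      _ = 2 * k * (2 * k + (j + 1)).choose k * 2 ^ (j + 1) := by rw [← add_assoc]; ring

theorem four_pow_min_mul_three_pow_le (hk : 0 < k) (hkn : 2 * k ≤ n) :
    4 ^ min k (n / 3) * 3 ^ k ≤ 2 * k * n.choose k * 2 ^ k := by
  rcases le_total (3 * k) n with h | h
  · calc 4 ^ min k (n / 3) * 3 ^ k = 4 ^ k * 3 ^ k := by rw [min_eq_left (by lia)]
      _ ≤ 2 * k * (2 * k + k).choose k * 2 ^ k := four_pow_mul_three_pow_le hk le_rfl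
      _ ≤ 2 * k * n.choose k * 2 ^ k := by gcongr; lia
  obtain ⟨j, rfl⟩ : ∃ j, n = 2 * k + j := ⟨n - 2 * k, by lia⟩
  obtain ⟨i, rfl⟩ : ∃ i, k = j + i := ⟨k - j, by lia⟩
  set m := min (j + i) ((2 * (j + i) + j) / 3)
  have hm : 3 * m + i ≤ 3 * (j + i) := by lia
  have trade : 4 ^ m * 3 ^ i ≤ 4 ^ (j + i) * 2 ^ i := by
    refine (Nat.pow_le_pow_iff_left (n := 3) (by norm_num)).1 ?_
    calc (4 ^ m * 3 ^ i) ^ 3 = 4 ^ (3 * m) * 27 ^ i := by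
          rw [mul_pow, ← pow_mul', ← pow_mul', pow_mul 3]; norm_num
      _ ≤ 4 ^ (3 * m) * 32 ^ i := by gcongr; norm_num
      _ = 4 ^ (3 * m + i) * 8 ^ i := by rw [pow_add, mul_assoc, ← mul_pow]; norm_num
      _ ≤ 4 ^ (3 * (j + i)) * 8 ^ i := by gcongr; norm_num
      _ = (4 ^ (j + i) * 2 ^ i) ^ 3 := by
          rw [mul_pow, ← pow_mul', ← pow_mul', pow_mul 2]; norm_num
  calc 4 ^ m * 3 ^ (j + i) = 4 ^ m * 3 ^ i * 3 ^ j := by ring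
    _ ≤ 4 ^ (j + i) * 2 ^ i * 3 ^ j := by gcongr
    _ = 4 ^ (j + i) * 3 ^ j * 2 ^ i := by ring
    _ ≤ 2 * (j + i) * (2 * (j + i) + j).choose (j + i) * 2 ^ j * 2 ^ i :=
        Nat.mul_le_mul_right _ (four_pow_mul_three_pow_le hk (by lia))
    _ = 2 * (j + i) * (2 * (j + i) + j).choose (j + i) * 2 ^ (j + i) := by ring

theorem dvd_choose_iff_dvd_descFactorial (hp : p.Prime) (hkp : k < p) :
    p ∣ n.choose k ↔ p ∣ n.descFactorial k := by
  rw [Nat.descFactorial_eq_factorial_mul_choose, hp.dvd_mul, hp.dvd_factorial]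
  simp [hkp]

theorem dvd_choose_of_mem_Ioc (hp : p.Prime) (hkn : 2 * k ≤ n) (hpmem : p ∈ Set.Ioc (n - k) n) :
    p ∣ n.choose k := by
  obtain ⟨hlt, hle⟩ := hpmem
  rw [dvd_choose_iff_dvd_descFactorial hp (by lia), Nat.descFactorial_eq_prod_range]
  simpa [Nat.sub_sub_self hle] using
    dvd_prod_of_mem (fun i ↦ n - i) (mem_range.2 (by lia : n - p < k))

end Binomial

section SmoothBinomial

open Nat Finset

variable {n k : ℕ}

theorem choose_eq_prod_primesLE (hkn : k ≤ n) (hsmooth : n.choose k ∈ smoothNumbers (k + 1)) :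
    n.choose k = ∏ p ∈ primesLE k, p ^ (n.choose k).factorization p := by
  conv_lhs => rw [← Nat.prod_pow_factorization_choose n k hkn]
  refine (prod_subset (fun p hp ↦ ?_) fun p _ hp ↦ ?_).symm
  · rw [mem_primesLE] at hp
    exact mem_range.2 (by lia)
  · by_cases hpp : p.Prime
    · have hkp : k < p := by
        by_contra! hpk
        exact hp (mem_primesLE.2 ⟨hpk, hpp⟩)
      rw [Nat.factorization_eq_zero_of_not_dvd (fun hdvd ↦ ?_), pow_zero]
      have := mem_smoothNumbers'.1 hsmooth p hpp hdvd
      lia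
    · rw [Nat.factorization_eq_zero_of_not_prime _ hpp, pow_zero]

theorem pow_sub_primeCounting_le (hk : 0 < k) (hkn : k ≤ n)
    (hsmooth : n.choose k ∈ smoothNumbers (k + 1)) :
    n ^ (k - primeCounting k) ≤ k ^ k := by
  have hchoose : n.choose k ≤ n ^ primeCounting k := by
    rw [choose_eq_prod_primesLE hkn hsmooth, ← primesLE_card_eq_primeCounting]
    exact prod_le_pow_card _ _ _ fun p _ ↦ Nat.pow_factorization_choose_le (by lia)
  have hpi : primeCounting k ≤ k := by
    rw [← primesLE_card_eq_primeCounting]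
    simpa using card_le_card (t := Icc 1 k) fun p hp ↦
      mem_Icc.2 ⟨(prime_of_mem_primesLE hp).pos, le_of_mem_primesLE hp⟩
  refine Nat.le_of_mul_le_mul_right (c := n ^ primeCounting k) ?_ (pow_pos (by lia) _)
  calc n ^ (k - primeCounting k) * n ^ primeCounting k = n ^ k := by
        rw [← pow_add, Nat.sub_add_cancel hpi]
    _ ≤ k ^ k * n.choose k := pow_le_pow_mul_choose hkn
    _ ≤ k ^ k * n ^ primeCounting k := by gcongr

theorem pow_factorization_choose_le_ite {p : ℕ} (hk : 3 ≤ k) (hkn : 2 * k ≤ n) (hp : p.Prime)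
    (hpk : p ≤ k) (hnp : sqrt n < p) :
    p ^ (n.choose k).factorization p ≤ if p ≤ n / 3 then p else 1 := by
  split_ifs with h3
  · have hsq : n < p ^ 2 := by rw [pow_two]; exact Nat.sqrt_lt.1 hnp
    exact (Nat.pow_le_pow_right hp.pos (Nat.factorization_choose_le_one hsq)).trans_eq (pow_one p)
  · rw [Nat.factorization_choose_of_lt_three_mul _ hpk (by lia) (by lia), pow_zero]
    rintro rfl
    lia

theorem choose_le_pow_mul_four_pow (hk : 3 ≤ k) (hkn : 2 * k ≤ n)
    (hsmooth : n.choose k ∈ smoothNumbers (k + 1)) :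
    n.choose k ≤ n ^ primeCounting (sqrt n) * 4 ^ min k (n / 3) := by
  have hsmall : ∏ p ∈ primesLE k with p ≤ sqrt n, p ^ (n.choose k).factorization p ≤
      n ^ primeCounting (sqrt n) := by
    rw [← primesLE_card_eq_primeCounting]
    refine (prod_le_pow_card _ _ n fun p _ ↦ Nat.pow_factorization_choose_le (by lia)).trans
      (Nat.pow_le_pow_right (by lia) (card_le_card fun p hp ↦ ?_))
    simp only [mem_filter, mem_primesLE] at hp ⊢
    exact ⟨hp.2, hp.1.2⟩
  have hlarge : ∏ p ∈ primesLE k with ¬ p ≤ sqrt n, p ^ (n.choose k).factorization p ≤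
      4 ^ min k (n / 3) := by
    calc ∏ p ∈ primesLE k with ¬ p ≤ sqrt n, p ^ (n.choose k).factorization p
        ≤ ∏ p ∈ primesLE k with ¬ p ≤ sqrt n, if p ≤ n / 3 then p else 1 := by
          refine prod_le_prod' fun p hp ↦ ?_
          simp only [mem_filter, mem_primesLE, not_le] at hp
          exact pow_factorization_choose_le_ite hk hkn hp.1.2 hp.1.1 hp.2
      _ ≤ primorial (min k (n / 3)) := by
          rw [← prod_filter, primorial_eq_prod_primesLE]
          refine prod_le_prod_of_subset_of_one_le' (fun p hp ↦ ?_) fun p hp _ ↦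
            (prime_of_mem_primesLE hp).one_lt.le
          simp only [mem_filter, mem_primesLE, le_min_iff] at hp ⊢
          exact ⟨⟨hp.1.1.1, hp.2⟩, hp.1.1.2⟩
      _ ≤ 4 ^ min k (n / 3) := primorial_le_four_pow _
  rw [choose_eq_prod_primesLE (by lia : k ≤ n) hsmooth,
    ← prod_filter_mul_prod_filter_not _ (· ≤ sqrt n)]
  exact Nat.mul_le_mul hsmall hlarge

end SmoothBinomial

section Sylvester

open Nat Finset

variable {n k : ℕ}

theorem fifteen_mul_primeCounting_le {x : ℕ} (hx : 30 ≤ x) :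
    15 * primeCounting x ≤ 150 + 4 * x := by
  have hpi : primeCounting 30 = 10 := by decide +kernel
  have htot : totient 30 = 8 := by decide +kernel
  have hsieve := Nat.primeCounting_add_le (a := 30) (k := 30) (by norm_num) le_rfl (x - 30)
  rw [hpi, htot, Nat.add_sub_cancel' hx] at hsieve
  lia

theorem pow_primeCounting_lt_sixteen_pow (hk : 2 ≤ k) (hk' : k < 1024) :
    (16 * k) ^ primeCounting k < 16 ^ k := by
  rcases lt_or_ge k 100 with hlt | hge
  · have : ∀ k < 100, 2 ≤ k → (16 * k) ^ primeCounting k < 16 ^ k := by decide +kernel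
    exact this k hlt hk
  · have : ∀ k < 1024, 100 ≤ k → (16 * k) ^ ((150 + 4 * k) / 15) < 16 ^ k := by decide +kernel
    refine (Nat.pow_le_pow_right (by lia) ?_).trans_lt (this k hk' hge)
    have := fifteen_mul_primeCounting_le (x := k) (by lia)
    lia

theorem lt_sixteen_mul_of_choose_mem_smoothNumbers (hk : 2 ≤ k) (hk' : k < 1024) (hkn : k ≤ n)
    (hsmooth : n.choose k ∈ smoothNumbers (k + 1)) : n < 16 * k := by
  by_contra! hn
  refine (pow_primeCounting_lt_sixteen_pow hk hk').not_ge ?_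
  refine le_of_mul_le_mul_left (a := k ^ k) ?_ (by positivity)
  calc k ^ k * 16 ^ k = (16 * k) ^ k := by rw [mul_pow, mul_comm]
    _ ≤ (16 * k) ^ (k - primeCounting k) * (16 * k) ^ primeCounting k := by
        rw [← pow_add]; exact Nat.pow_le_pow_right (by lia) (by lia)
    _ ≤ n ^ (k - primeCounting k) * (16 * k) ^ primeCounting k := by gcongr
    _ ≤ k ^ k * (16 * k) ^ primeCounting k :=
        Nat.mul_le_mul_right _ (pow_sub_primeCounting_le (by lia) hkn hsmooth)

theorem exists_mem_Ioc_of_isChain {g : ℕ → ℕ} (hg : Monotone g) {l : List ℕ} {a b x : ℕ}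
    (hl : (a :: l).IsChain fun p q ↦ q ≤ p + g p) (hb : b ∈ l) (hax : a ≤ x) (hxb : x < b) :
    ∃ p ∈ l, p ∈ Set.Ioc x (x + g x) := by
  induction l generalizing a with
  | nil => simp at hb
  | cons q l ih =>
    rw [List.isChain_cons_cons] at hl
    rcases lt_or_ge x q with hxq | hqx
    · exact ⟨q, List.mem_cons_self, hxq, hl.1.trans (Nat.add_le_add hax (hg hax))⟩
    · obtain rfl | hb := List.mem_cons.1 hb
      · lia
      · obtain ⟨p, hp, hpx⟩ := ih hl.2 hb hqx
        exact ⟨p, List.mem_cons_of_mem _ hp, hpx⟩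

theorem exists_prime_mem_Ioc {x : ℕ} (hx : 14 ≤ x) (hx' : x < 15773) :
    ∃ p, p.Prime ∧ p ∈ Set.Ioc x (x + max 14 (x / 15)) := by
  -- Built greedily: each entry is the largest prime within `max 14 (p / 15)` of the previous `p`.
  let ladder := [23, 37, 47, 61, 73, 83, 97, 109, 113, 127, 139, 151, 163, 173, 181, 193, 199, 211,
    223, 233, 241, 257, 271, 283, 293, 311, 331, 353, 373, 397, 421, 449, 467, 491, 523, 557, 593,
    631, 673, 709, 751, 797, 839, 887, 941, 997, 1063, 1129, 1201, 1279, 1361, 1451, 1543, 1637,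
    1741, 1847, 1951, 2081, 2213, 2357, 2503, 2663, 2837, 3023, 3221, 3433, 3659, 3889, 4139, 4409,
    4691, 5003, 5333, 5683, 6053, 6451, 6871, 7321, 7793, 8311, 8863, 9439, 10067, 10733, 11447,
    12203, 13009, 13873, 14797, 15773]
  have hprime : ∀ p ∈ ladder, p.Prime := by
    simp only [ladder, List.forall_mem_cons]
    norm_num
  have hmono : Monotone fun p ↦ max 14 (p / 15) := fun p q hpq ↦
    max_le_max le_rfl (Nat.div_le_div_right hpq)
  have hchain : (14 :: ladder).IsChain fun p q ↦ q ≤ p + max 14 (p / 15) := by decide +kernel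
  obtain ⟨p, hp, hpx⟩ := exists_mem_Ioc_of_isChain hmono hchain (b := 15773)
    (by simp [ladder]) hx hx'
  exact ⟨p, hprime p hp, hpx⟩

theorem notMem_smoothNumbers_succ_iff {m : ℕ} :
    m ∉ smoothNumbers (k + 1) ↔ ∃ p, p.Prime ∧ k < p ∧ p ∣ m := by
  simp only [mem_smoothNumbers', not_forall, not_lt, Nat.succ_le_iff, exists_prop]
  tauto

theorem exists_prime_dvd_choose_of_lt_fourteen (hk : 2 ≤ k) (hk' : k < 14) (hkn : 2 * k ≤ n)
    (hn : n < 16 * k) : ∃ p, p.Prime ∧ k < p ∧ p ∣ n.choose k := by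
  have : ∀ k < 14, ∀ n < 16 * k, 2 ≤ k → 2 * k ≤ n →
      ∃ p ∈ primesLE 113, k < p ∧ p ∣ n.descFactorial k := by decide +kernel
  obtain ⟨p, hp, hkp, hdvd⟩ := this k hk' n hn hk hkn
  have hp := prime_of_mem_primesLE hp
  exact ⟨p, hp, hkp, (dvd_choose_iff_dvd_descFactorial hp hkp).2 hdvd⟩

theorem exists_prime_dvd_choose_of_lt_sixteen_mul (hk : 2 ≤ k) (hk' : k < 1024) (hkn : 2 * k ≤ n)
    (hn : n < 16 * k) : ∃ p, p.Prime ∧ k < p ∧ p ∣ n.choose k := by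
  rcases lt_or_ge k 14 with hk14 | hk14
  · exact exists_prime_dvd_choose_of_lt_fourteen hk hk14 hkn hn
  · obtain ⟨p, hp, hlt, hle⟩ := exists_prime_mem_Ioc (x := n - k) (by lia) (by lia)
    exact ⟨p, hp, by lia, dvd_choose_of_mem_Ioc hp hkn ⟨hlt, by lia⟩⟩

theorem two_pow_le_pow_primeCounting_sqrt (hk : 3 ≤ k) (hkn : 8 * k ≤ n)
    (hsmooth : n.choose k ∈ smoothNumbers (k + 1)) : 2 ^ k ≤ n ^ primeCounting (sqrt n) := by
  refine le_of_mul_le_mul_left (a := k ^ k * 4 ^ k) ?_ (by positivity)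
  calc k ^ k * 4 ^ k * 2 ^ k = (8 * k) ^ k := by rw [← mul_pow, ← mul_pow]; ring
    _ ≤ n ^ k := by gcongr
    _ ≤ k ^ k * n.choose k := pow_le_pow_mul_choose (by lia)
    _ ≤ k ^ k * (n ^ primeCounting (sqrt n) * 4 ^ min k (n / 3)) := by
        gcongr; exact choose_le_pow_mul_four_pow hk (by lia) hsmooth
    _ ≤ k ^ k * (n ^ primeCounting (sqrt n) * 4 ^ k) := by
        gcongr
        · norm_num
        · exact min_le_left _ _
    _ = k ^ k * 4 ^ k * n ^ primeCounting (sqrt n) := by ring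

theorem three_pow_le_mul_pow_primeCounting_sqrt (hk : 3 ≤ k) (hkn : 2 * k ≤ n)
    (hsmooth : n.choose k ∈ smoothNumbers (k + 1)) :
    3 ^ k ≤ 2 * k * n ^ primeCounting (sqrt n) * 2 ^ k := by
  refine le_of_mul_le_mul_left (a := 4 ^ min k (n / 3)) ?_ (by positivity)
  calc 4 ^ min k (n / 3) * 3 ^ k ≤ 2 * k * n.choose k * 2 ^ k :=
        four_pow_min_mul_three_pow_le (by lia) hkn
    _ ≤ 2 * k * (n ^ primeCounting (sqrt n) * 4 ^ min k (n / 3)) * 2 ^ k := by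
        gcongr; exact choose_le_pow_mul_four_pow hk hkn hsmooth
    _ = 4 ^ min k (n / 3) * (2 * k * n ^ primeCounting (sqrt n) * 2 ^ k) := by ring

theorem pow_five_le_pow_seven_of_choose_mem_smoothNumbers (hk : 1024 ≤ k) (hkn : k ≤ n)
    (hsmooth : n.choose k ∈ smoothNumbers (k + 1)) : n ^ 5 ≤ k ^ 7 := by
  have hpi : 5 * k ≤ 7 * (k - primeCounting k) := by
    have := fifteen_mul_primeCounting_le (x := k) (by lia)
    lia
  refine (Nat.pow_le_pow_iff_left (n := k) (by lia)).1 ?_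
  calc (n ^ 5) ^ k = n ^ (5 * k) := by rw [← pow_mul]
    _ ≤ n ^ (7 * (k - primeCounting k)) := Nat.pow_le_pow_right (by lia) hpi
    _ = (n ^ (k - primeCounting k)) ^ 7 := by rw [← pow_mul']
    _ ≤ (k ^ k) ^ 7 := Nat.pow_le_pow_left (pow_sub_primeCounting_le (by lia) hkn hsmooth) 7
    _ = (k ^ 7) ^ k := pow_right_comm _ _ _

theorem logb_two_le_sub_one {t : ℝ} (ht : 2 ≤ t) : Real.logb 2 t ≤ t - 1 := by
  rw [Real.logb_le_iff_le_rpow (by norm_num) (by linarith)]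
  have := one_add_mul_self_le_rpow_one_add (s := 1) (p := t - 1) (by norm_num) (by linarith)
  norm_num at this ⊢
  exact this

theorem logb_two_le_mul_sub_one {x t : ℝ} {m : ℕ} (ht : 2 ≤ t) (hx : 0 < x) (hxt : x ≤ t ^ m) :
    Real.logb 2 x ≤ m * (t - 1) :=
  calc Real.logb 2 x ≤ Real.logb 2 (t ^ m) := Real.logb_le_logb_of_le (by norm_num) hx hxt
    _ = m * Real.logb 2 t := Real.logb_pow ..
    _ ≤ m * (t - 1) := by gcongr; exact logb_two_le_sub_one ht

theorem primeCounting_sqrt_mul_logb_le (hn : 900 ≤ n) {t y : ℝ} {m : ℕ} (ht : 2 ≤ t) (hy : 0 ≤ y)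
    (hny : n ≤ y ^ 2) (hnt : n ≤ t ^ m) :
    primeCounting (sqrt n) * Real.logb 2 n ≤ (10 + 4 / 15 * y) * (m * (t - 1)) := by
  have hn1 : (1 : ℝ) ≤ n := by exact_mod_cast (by lia : 1 ≤ n)
  have hsqrt : (sqrt n : ℝ) ≤ y := by
    refine le_of_sq_le_sq (le_trans ?_ hny) hy
    exact_mod_cast Nat.sqrt_le' n
  have hpi : (primeCounting (sqrt n) : ℝ) ≤ 10 + 4 / 15 * y := by
    have : 15 * (primeCounting (sqrt n) : ℝ) ≤ 150 + 4 * sqrt n := by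
      exact_mod_cast fifteen_mul_primeCounting_le (Nat.le_sqrt.2 (by lia))
    linarith
  exact mul_le_mul hpi (logb_two_le_mul_sub_one ht (by linarith) hnt)
    (Real.logb_nonneg (by norm_num) hn1) (by linarith)

-- With `t = k ^ (1 / 10)` the bounds for large `k` become polynomial inequalities on `2 ≤ t`.
theorem exists_two_le_pow_ten_eq (hk : 1024 ≤ k) : ∃ t : ℝ, 2 ≤ t ∧ t ^ 10 = k := by
  refine ⟨(k : ℝ) ^ (10 : ℝ)⁻¹, ?_, ?_⟩
  · rw [Real.le_rpow_inv_iff_of_pos (by norm_num) (by positivity) (by norm_num)]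
    norm_num
    exact_mod_cast hk
  · exact_mod_cast Real.rpow_inv_natCast_pow (n := 10) k.cast_nonneg (by norm_num)

theorem choose_notMem_smoothNumbers_of_eight_mul_le (hk : 1024 ≤ k) (hkn : 8 * k ≤ n) :
    n.choose k ∉ smoothNumbers (k + 1) := by
  intro hsmooth
  obtain ⟨t, ht, htk⟩ := exists_two_le_pow_ten_eq hk
  have hnt : (n : ℝ) ≤ t ^ 14 := by
    refine le_of_pow_le_pow_left₀ (n := 5) (by norm_num) (by positivity) ?_
    calc (n : ℝ) ^ 5 ≤ k ^ 7 := by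
          exact_mod_cast pow_five_le_pow_seven_of_choose_mem_smoothNumbers hk (by lia) hsmooth
      _ = (t ^ 14) ^ 5 := by rw [← htk]; ring
  have hlower : k ≤ primeCounting (sqrt n) * Real.logb 2 n := by
    have hle : (2 : ℝ) ^ k ≤ n ^ primeCounting (sqrt n) := by
      exact_mod_cast two_pow_le_pow_primeCounting_sqrt (by lia) hkn hsmooth
    have hlog := Real.logb_le_logb_of_le (b := 2) (by norm_num) (by positivity) hle
    rwa [Real.logb_pow, Real.logb_pow, Real.logb_self_eq_one (by norm_num), mul_one] at hlog
  have hupper := primeCounting_sqrt_mul_logb_le (n := n) (y := t ^ 7) (by lia) ht (by positivity)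
    (hnt.trans_eq (by ring)) hnt
  have hgap : 0 < t ^ 10 - (10 + 4 / 15 * t ^ 7) * (14 * (t - 1)) := by
    obtain ⟨u, hu, rfl⟩ : ∃ u ≥ 0, t = 2 + u := ⟨t - 2, by linarith, by ring⟩
    ring_nf
    positivity
  push_cast at hupper
  linarith

theorem le_logb_two_three_halves : 29 / 50 ≤ Real.logb 2 (3 / 2) := by
  have hlog := Real.logb_le_logb_of_le (b := 2) (x := 2 ^ 29) (y := (3 / 2) ^ 50)
    (by norm_num) (by norm_num) (by norm_num)
  rw [Real.logb_pow, Real.logb_pow, Real.logb_self_eq_one (by norm_num)] at hlog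
  push_cast at hlog
  linarith

theorem mul_le_logb_add_primeCounting_sqrt_mul_logb (hk : 3 ≤ k) (hkn : 2 * k ≤ n)
    (hsmooth : n.choose k ∈ smoothNumbers (k + 1)) :
    k * (29 / 50) ≤ 1 + Real.logb 2 k + primeCounting (sqrt n) * Real.logb 2 n := by
  have hk0 : (0 : ℝ) < k := by exact_mod_cast (by lia : 0 < k)
  have hn0 : (0 : ℝ) < n := by exact_mod_cast (by lia : 0 < n)
  have hle : (3 / 2 : ℝ) ^ k ≤ 2 * k * n ^ primeCounting (sqrt n) := by
    rw [div_pow, div_le_iff₀ (by positivity)]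
    exact_mod_cast three_pow_le_mul_pow_primeCounting_sqrt hk hkn hsmooth
  have hlog := Real.logb_le_logb_of_le (b := 2) (by norm_num) (by positivity) hle
  rw [Real.logb_mul (by positivity) (by positivity), Real.logb_mul (by norm_num) hk0.ne',
    Real.logb_pow, Real.logb_pow, Real.logb_self_eq_one (by norm_num)] at hlog
  exact (mul_le_mul_of_nonneg_left le_logb_two_three_halves hk0.le).trans hlog

theorem choose_notMem_smoothNumbers_of_lt_eight_mul (hk : 1024 ≤ k) (hkn : 2 * k ≤ n)
    (hnk : n < 8 * k) : n.choose k ∉ smoothNumbers (k + 1) := by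
  intro hsmooth
  obtain ⟨t, ht, htk⟩ := exists_two_le_pow_ten_eq hk
  have hk0 : (0 : ℝ) < k := by exact_mod_cast (by lia : 0 < k)
  have hn8 : (n : ℝ) ≤ 8 * t ^ 10 := by rw [htk]; exact_mod_cast hnk.le
  have hnt : (n : ℝ) ≤ t ^ 13 :=
    calc (n : ℝ) ≤ 2 ^ 3 * t ^ 10 := by linarith
      _ ≤ t ^ 3 * t ^ 10 := by gcongr
      _ = t ^ 13 := by ring
  have hny : (n : ℝ) ≤ (2.83 * t ^ 5) ^ 2 :=
    calc (n : ℝ) ≤ 8 * t ^ 10 := hn8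
      _ ≤ 2.83 ^ 2 * t ^ 10 := by gcongr; norm_num
      _ = (2.83 * t ^ 5) ^ 2 := by ring
  have hlower := mul_le_logb_add_primeCounting_sqrt_mul_logb (by lia) hkn hsmooth
  have hlogk := logb_two_le_mul_sub_one ht hk0 htk.ge
  have hupper := primeCounting_sqrt_mul_logb_le (n := n) (by lia) ht (by positivity) hny hnt
  have hgap : 0 < t ^ 10 * (29 / 50) -
      (1 + 10 * (t - 1) + (10 + 4 / 15 * (2.83 * t ^ 5)) * (13 * (t - 1))) := by
    obtain ⟨u, hu, rfl⟩ : ∃ u ≥ 0, t = 2 + u := ⟨t - 2, by linarith, by ring⟩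
    ring_nf
    positivity
  rw [htk] at hgap
  push_cast at hupper hlogk
  linarith

theorem exists_prime_dvd_choose (hk : 0 < k) (hkn : 2 * k ≤ n) :
    ∃ p, p.Prime ∧ k < p ∧ p ∣ n.choose k := by
  obtain rfl | hk2 : k = 1 ∨ 2 ≤ k := by lia
  · have hp : n.minFac.Prime := Nat.minFac_prime (by lia)
    exact ⟨n.minFac, hp, hp.one_lt, by simpa using n.minFac_dvd⟩
  rw [← notMem_smoothNumbers_succ_iff]
  intro hsmooth
  rcases lt_or_ge k 1024 with hlt | hge
  · have hn : n < 16 * k :=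
      lt_sixteen_mul_of_choose_mem_smoothNumbers hk2 hlt (by lia) hsmooth
    exact notMem_smoothNumbers_succ_iff.2
      (exists_prime_dvd_choose_of_lt_sixteen_mul hk2 hlt hkn hn) hsmooth
  rcases lt_or_ge n (8 * k) with hnk | hnk
  · exact choose_notMem_smoothNumbers_of_lt_eight_mul hge hkn hnk hsmooth
  · exact choose_notMem_smoothNumbers_of_eight_mul_le hge hnk hsmooth

end Sylvester

section NewtonPolygon

open Finset.HasAntidiagonal (antidiagonal)

variable {O : Type*} [CommRing O] {π : O} {k : ℕ} {G H : O[X]}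

/-- The height `k · v_π(G_i) + i` of the `i`-th point of the Newton polygon of `G` at `π`, measured
along lines of slope `-1 / k`; it is `⊤` where the coefficient vanishes (for `k > 0`). -/
noncomputable def newtonWeight (π : O) (k : ℕ) (G : O[X]) (i : ℕ) : ℕ∞ :=
  k * emultiplicity π (G.coeff i) + i

theorem exists_last_minimum {w : ℕ → ℕ∞} (hw : ∀ i : ℕ, i ≤ w i) (h0 : w 0 ≠ ⊤) :
    ∃ s, (∀ i, w s ≤ w i) ∧ ∀ i > s, w s < w i := by
  classical
  obtain ⟨m, hm⟩ := ENat.exists_eq_iInf w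
  have hmin : ∀ j, w m ≤ w j := fun j ↦ hm ▸ iInf_le w j
  obtain ⟨N, hN⟩ := ENat.ne_top_iff_exists.mp h0
  have bound : ∀ i, (∀ j, w i ≤ w j) → i ≤ N := fun i hi ↦ by
    exact_mod_cast (hw i).trans ((hi 0).trans hN.ge)
  have hs := Nat.findGreatest_spec (P := fun i ↦ ∀ j, w i ≤ w j) (bound m hmin) hmin
  refine ⟨_, hs, fun i hi ↦ (hs i).lt_of_not_ge fun hle ↦ ?_⟩
  have hi' : ∀ j, w i ≤ w j := fun j ↦ hle.trans (hs j)
  exact Nat.findGreatest_is_greatest hi (bound i hi') hi'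

theorem self_le_newtonWeight (π : O) (k : ℕ) (G : O[X]) (i : ℕ) : i ≤ newtonWeight π k G i :=
  le_add_self

theorem exists_emultiplicity_le_emultiplicity_sum {ι : Type*} {s : Finset ι} (hs : s.Nonempty)
    (π : O) (f : ι → O) : ∃ i ∈ s, emultiplicity π (f i) ≤ emultiplicity π (∑ i ∈ s, f i) := by
  induction hs using Finset.Nonempty.cons_induction with
  | singleton a => simp
  | cons a s ha _ ih =>
    obtain ⟨i, hi, hle⟩ := ih
    rw [Finset.sum_cons]
    rcases min_le_iff.mp (min_le_emultiplicity_add (p := π) (a := f a) (b := ∑ i ∈ s, f i))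
      with h | h
    · exact ⟨a, by simp, h⟩
    · exact ⟨i, by simp [hi], hle.trans h⟩

theorem exists_newtonWeight_le_newtonWeight_sum {ι : Type*} {s : Finset ι} (hs : s.Nonempty)
    (π : O) (k : ℕ) (f : ι → O[X]) (j : ℕ) :
    ∃ i ∈ s, newtonWeight π k (f i) j ≤ newtonWeight π k (∑ i ∈ s, f i) j := by
  obtain ⟨i, hi, hle⟩ :=
    exists_emultiplicity_le_emultiplicity_sum hs π fun i ↦ (f i).coeff j
  rw [← finsetSum_coeff] at hle
  refine ⟨i, hi, ?_⟩
  unfold newtonWeight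
  gcongr

theorem dvd_coeff_of_dvd_coeff_zero (hG : ∀ j > 0, newtonWeight π k G 0 < newtonWeight π k G j)
    (hG0 : π ∣ G.coeff 0) {s : ℕ} (hs : s ≤ k) : π ∣ G.coeff s := by
  rcases s.eq_zero_or_pos with rfl | hs0
  · exact hG0
  by_contra hdvd
  refine (hG s hs0).not_ge ?_
  calc newtonWeight π k G s = s := by
        rw [newtonWeight, emultiplicity_eq_zero.mpr hdvd, mul_zero, zero_add]
    _ ≤ k * 1 := by rw [mul_one]; exact_mod_cast hs
    _ ≤ k * emultiplicity π (G.coeff 0) := by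
        gcongr
        exact Order.one_le_iff_pos.mpr (emultiplicity_pos_of_dvd hG0)
    _ ≤ newtonWeight π k G 0 := le_self_add

variable [IsDomain O]

theorem newtonWeight_mul_zero (hπ : Prime π) :
    newtonWeight π k (G * H) 0 = newtonWeight π k G 0 + newtonWeight π k H 0 := by
  simp only [newtonWeight, mul_coeff_zero, emultiplicity_mul hπ, Nat.cast_zero, add_zero, mul_add]

theorem newtonWeight_add_newtonWeight (hπ : Prime π) (i j : ℕ) :
    newtonWeight π k G i + newtonWeight π k H j =
      k * emultiplicity π (G.coeff i * H.coeff j) + (i + j : ℕ) := by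
  rw [newtonWeight, newtonWeight, emultiplicity_mul hπ]
  push_cast
  ring

-- In the convolution for the coefficient `s + t`, the last minima `s` and `t` produce the unique
-- term of least valuation.
theorem newtonWeight_mul_add (hπ : Prime π) {s t : ℕ}
    (hs : ∀ i, newtonWeight π k G s ≤ newtonWeight π k G i)
    (hs' : ∀ i > s, newtonWeight π k G s < newtonWeight π k G i)
    (ht : ∀ j, newtonWeight π k H t ≤ newtonWeight π k H j)
    (ht' : ∀ j > t, newtonWeight π k H t < newtonWeight π k H j) :
    newtonWeight π k (G * H) (s + t) = newtonWeight π k G s + newtonWeight π k H t := by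
  have hsfin : newtonWeight π k G s ≠ ⊤ := (hs' _ s.lt_succ_self).ne_top
  have htfin : newtonWeight π k H t ≠ ⊤ := (ht' _ t.lt_succ_self).ne_top
  have off_lt : ∀ x ∈ (antidiagonal (s + t)).erase (s, t),
      emultiplicity π (G.coeff s * H.coeff t) < emultiplicity π (G.coeff x.1 * H.coeff x.2) := by
    rintro ⟨i, j⟩ hx
    obtain ⟨hne, hij⟩ : (i, j) ≠ (s, t) ∧ i + j = s + t := by simpa using hx
    have hlt : newtonWeight π k G s + newtonWeight π k H t <
        newtonWeight π k G i + newtonWeight π k H j := by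
      rcases lt_trichotomy s i with h | rfl | h
      · exact ENat.add_lt_add_of_lt_of_le htfin (hs' i h) (ht j)
      · exact absurd (by rw [Nat.add_left_cancel hij]) hne
      · exact ENat.add_lt_add_of_le_of_lt hsfin (hs i) (ht' j (by lia))
    rw [newtonWeight_add_newtonWeight hπ, newtonWeight_add_newtonWeight hπ, hij] at hlt
    exact lt_of_mul_lt_mul_left' (lt_of_add_lt_add_right hlt)
  have hmem : (s, t) ∈ antidiagonal (s + t) := by simp
  rw [newtonWeight_add_newtonWeight hπ, newtonWeight, coeff_mul, ← Finset.sum_erase_add _ _ hmem]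
  rcases ((antidiagonal (s + t)).erase (s, t)).eq_empty_or_nonempty with hoff | hoff
  · rw [hoff, Finset.sum_empty, zero_add]
  · obtain ⟨x, hx, hle⟩ := exists_emultiplicity_le_emultiplicity_sum hoff π
      fun x ↦ G.coeff x.1 * H.coeff x.2
    rw [emultiplicity_add_of_gt ((off_lt x hx).trans_le hle)]

theorem newtonWeight_zero_lt_of_mul (hπ : Prime π)
    (hGH : ∀ j > 0, newtonWeight π k (G * H) 0 < newtonWeight π k (G * H) j) :
    ∀ j > 0, newtonWeight π k G 0 < newtonWeight π k G j := by
  have hfin : newtonWeight π k G 0 + newtonWeight π k H 0 ≠ ⊤ :=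
    newtonWeight_mul_zero hπ ▸ (hGH 1 one_pos).ne_top
  obtain ⟨s, hs, hs'⟩ := exists_last_minimum (self_le_newtonWeight π k G)
    (ne_top_of_le_ne_top hfin le_self_add)
  obtain ⟨t, ht, ht'⟩ := exists_last_minimum (self_le_newtonWeight π k H)
    (ne_top_of_le_ne_top hfin le_add_self)
  have hle : newtonWeight π k (G * H) (s + t) ≤ newtonWeight π k (G * H) 0 := by
    rw [newtonWeight_mul_add hπ hs hs' ht ht', newtonWeight_mul_zero hπ]
    exact add_le_add (hs 0) (ht 0)
  have hst : s + t = 0 := by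
    by_contra hne
    exact (hGH _ (Nat.pos_of_ne_zero hne)).not_ge hle
  rwa [Nat.eq_zero_of_add_eq_zero_right hst] at hs'

end NewtonPolygon

section Reduction

variable {R S : Type*} [CommRing R] [CommRing S] (f : R →+* S) (φ : R[X])

theorem adjoinRootMap_mk (g : R[X]) :
    AdjoinRoot.map f φ (φ.map f) dvd_rfl (AdjoinRoot.mk φ g) =
      AdjoinRoot.mk (φ.map f) (g.map f) := by
  rw [AdjoinRoot.map, AdjoinRoot.lift_mk, ← eval₂_map, ← AdjoinRoot.aeval_eq]
  rfl

variable {f φ} {r : R}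

theorem C_dvd_iff_map_eq_zero (hker : RingHom.ker f = Ideal.span {r}) (g : R[X]) :
    C r ∣ g ↔ g.map f = 0 := by
  rw [C_dvd_iff_dvd_coeff]
  simp only [← Ideal.mem_span_singleton, ← hker, RingHom.mem_ker, Polynomial.ext_iff, coeff_map,
    coeff_zero]

theorem of_dvd_mk_iff (hf : Function.Surjective f) (hker : RingHom.ker f = Ideal.span {r})
    (g : R[X]) : AdjoinRoot.of φ r ∣ AdjoinRoot.mk φ g ↔ φ.map f ∣ g.map f := by
  constructor
  · rintro ⟨y, hy⟩
    have hr : f r = 0 := by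
      rw [← RingHom.mem_ker, hker]
      exact Ideal.mem_span_singleton_self r
    rw [← AdjoinRoot.mk_eq_zero, ← adjoinRootMap_mk, hy, map_mul, AdjoinRoot.map_of, hr, map_zero,
      zero_mul]
  · rintro ⟨q, hq⟩
    obtain ⟨q, rfl⟩ := Polynomial.map_surjective f hf q
    obtain ⟨c, hc⟩ : C r ∣ g - φ * q := by
      rw [C_dvd_iff_map_eq_zero hker, Polynomial.map_sub, Polynomial.map_mul, hq, sub_self]
    refine ⟨AdjoinRoot.mk φ c, ?_⟩
    rw [← AdjoinRoot.mk_C, ← map_mul, ← hc, map_sub, map_mul, AdjoinRoot.mk_self, zero_mul,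
      sub_zero]

theorem of_dvd_iff_adjoinRootMap_eq_zero (hf : Function.Surjective f)
    (hker : RingHom.ker f = Ideal.span {r}) (x : AdjoinRoot φ) :
    AdjoinRoot.of φ r ∣ x ↔ AdjoinRoot.map f φ (φ.map f) dvd_rfl x = 0 := by
  obtain ⟨g, rfl⟩ := AdjoinRoot.mk_surjective x
  rw [of_dvd_mk_iff hf hker, adjoinRootMap_mk, AdjoinRoot.mk_eq_zero]

end Reduction

section ReductionPrime

variable {R K : Type*} [CommRing R] [IsDomain R] [Field K] {f : R →+* K} {φ : R[X]} {r : R}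

theorem prime_of_of_irreducible_map (hf : Function.Surjective f)
    (hker : RingHom.ker f = Ideal.span {r}) (hr : r ≠ 0) (hm : φ.Monic)
    (hirr : Irreducible (φ.map f)) : Prime (AdjoinRoot.of φ r) := by
  have := Fact.mk hirr
  have hdeg : φ.degree ≠ 0 := hm.degree_map f ▸ hirr.degree_pos.ne'
  have hinj := AdjoinRoot.of.injective_of_degree_ne_zero hdeg
  refine ⟨(map_ne_zero_iff _ hinj).mpr hr, fun hu ↦ ?_, fun a b hab ↦ ?_⟩
  · exact one_ne_zero ((map_one _).symm.trans
      ((of_dvd_iff_adjoinRootMap_eq_zero hf hker 1).mp hu.dvd))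
  · rw [of_dvd_iff_adjoinRootMap_eq_zero hf hker, map_mul, mul_eq_zero] at hab
    simpa only [of_dvd_iff_adjoinRootMap_eq_zero hf hker] using hab

end ReductionPrime

section RootTaylor

variable {R : Type*} [CommRing R]

/-- The expansion of a polynomial in powers of `X - θ`, where `θ` is the root of `φ` adjoined in
`AdjoinRoot φ`: the variable of the target stands for `X - θ`. -/
noncomputable def rootTaylor (φ : R[X]) : R[X] →+* (AdjoinRoot φ)[X] :=
  (taylorAlgHom (AdjoinRoot.root φ) : (AdjoinRoot φ)[X] →+* (AdjoinRoot φ)[X]).comp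
    (mapRingHom (AdjoinRoot.of φ))

theorem rootTaylor_apply (φ g : R[X]) :
    rootTaylor φ g = taylor (AdjoinRoot.root φ) (g.map (AdjoinRoot.of φ)) := rfl

theorem coeff_zero_rootTaylor (φ g : R[X]) : (rootTaylor φ g).coeff 0 = AdjoinRoot.mk φ g := by
  rw [rootTaylor_apply, taylor_coeff_zero, eval_map, ← AdjoinRoot.aeval_eq]
  rfl

theorem X_dvd_rootTaylor_self (φ : R[X]) : X ∣ rootTaylor φ φ := by
  rw [X_dvd_iff, coeff_zero_rootTaylor, AdjoinRoot.mk_self]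

theorem map_rootTaylor {S : Type*} [CommRing S] (f : R →+* S) (φ g : R[X]) :
    (rootTaylor φ g).map (AdjoinRoot.map f φ (φ.map f) dvd_rfl) =
      rootTaylor (φ.map f) (g.map f) := by
  rw [rootTaylor_apply, rootTaylor_apply, taylor_apply, taylor_apply, Polynomial.map_comp,
    Polynomial.map_map, Polynomial.map_map, Polynomial.map_add, map_X, map_C, AdjoinRoot.map_root]
  congr 2
  ext x
  simp

theorem coeff_one_rootTaylor (φ g : R[X]) :
    (rootTaylor φ g).coeff 1 = AdjoinRoot.mk φ (derivative g) := by
  rw [rootTaylor_apply, taylor_coeff_one, derivative_map, ← taylor_coeff_zero, ← rootTaylor_apply,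
    coeff_zero_rootTaylor]

theorem coeff_rootTaylor_pow_mul (φ Q : R[X]) (e : ℕ) :
    (rootTaylor φ (φ ^ e * Q)).coeff e =
      AdjoinRoot.mk φ (derivative φ) ^ e * AdjoinRoot.mk φ Q := by
  obtain ⟨U, hU⟩ := X_dvd_rootTaylor_self φ
  have hU0 : U.coeff 0 = AdjoinRoot.mk φ (derivative φ) := by
    rw [← coeff_one_rootTaylor, hU, coeff_X_mul]
  rw [map_mul, map_pow, hU, mul_pow, mul_assoc, coeff_X_pow_mul', if_pos le_rfl, Nat.sub_self,
    mul_coeff_zero, ← constantCoeff_apply, map_pow, constantCoeff_apply, hU0,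
    coeff_zero_rootTaylor]

theorem exists_coeff_rootTaylor_ne_zero {K : Type*} [Field K] [PerfectField K] {φ G : K[X]}
    (hφ : Irreducible φ) (hG : G ≠ 0) :
    ∃ s, s * φ.natDegree ≤ G.natDegree ∧ (rootTaylor φ G).coeff s ≠ 0 := by
  have := Fact.mk hφ
  obtain ⟨e, Q, hQ, rfl⟩ := WfDvdMonoid.max_power_factor hG hφ
  refine ⟨e, ?_, ?_⟩
  · rw [← natDegree_pow]
    exact natDegree_le_of_dvd (dvd_mul_right _ _) hG
  · -- Separability is what keeps the lowest coefficient of the expansion from vanishing.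
    have hder : ¬ φ ∣ derivative φ := fun h ↦
      hφ.not_isUnit ((PerfectField.separable_of_irreducible hφ).isUnit_of_dvd' dvd_rfl h)
    rw [coeff_rootTaylor_pow_mul]
    exact mul_ne_zero (pow_ne_zero _ (mt AdjoinRoot.mk_eq_zero.mp hder))
      (mt AdjoinRoot.mk_eq_zero.mp hQ)

end RootTaylor

section SchurSum

open scoped Nat

/-- The sum `∑ i ≤ n, (n! / i!) bᵢ xⁱ`, i.e. `n!` times the truncated exponential-type series with
coefficients `bᵢ`; the quotient of factorials is an exact division of natural numbers. -/
def schurSum {A : Type*} [CommSemiring A] (n : ℕ) (x : A) (b : ℕ → A) : A :=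
  ∑ i ∈ Finset.range (n + 1), ((n ! / i ! : ℕ) : A) * b i * x ^ i

theorem map_schurSum {A B : Type*} [CommSemiring A] [CommSemiring B] (f : A →+* B) (n : ℕ) (x : A)
    (b : ℕ → A) : f (schurSum n x b) = schurSum n (f x) (f ∘ b) := by
  simp only [schurSum, map_sum, map_mul, map_pow, map_natCast, Function.comp_apply]

theorem dvd_factorial_div_factorial {p n k i : ℕ} (hkn : k ≤ n) (hp : p ∣ n.choose k)
    (hi : i ≤ n - k) : p ∣ n ! / i ! := by
  have hdesc : n.descFactorial k ∣ n ! / i ! := by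
    rw [Nat.dvd_div_iff_mul_dvd (Nat.factorial_dvd_factorial (hi.trans (n.sub_le k))),
      ← Nat.factorial_mul_descFactorial hkn]
    exact Nat.mul_dvd_mul_right (Nat.factorial_dvd_factorial hi) _
  refine Dvd.dvd.trans ?_ hdesc
  rw [Nat.descFactorial_eq_factorial_mul_choose]
  exact hp.mul_left _

variable {A : Type*} [CommSemiring A] {p n k : ℕ}

theorem pow_dvd_schurSum (hkn : k ≤ n) (hpnk : p ∣ n.choose k) (hpA : (p : A) = 0) (x : A)
    (b : ℕ → A) : x ^ (n - k + 1) ∣ schurSum n x b := by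
  refine Finset.dvd_sum fun i _ ↦ ?_
  rcases le_or_gt i (n - k) with hi | hi
  · have hzero : ((n ! / i ! : ℕ) : A) = 0 := by
      obtain ⟨m, hm⟩ := dvd_factorial_div_factorial hkn hpnk hi
      rw [hm, Nat.cast_mul, hpA, zero_mul]
    rw [hzero, zero_mul, zero_mul]
    exact dvd_zero _
  · exact (pow_dvd_pow x hi).mul_left _

theorem coeff_zero_schurSum {x : A[X]} (hx : X ∣ x) (b : ℕ → A[X]) :
    (schurSum n x b).coeff 0 = n ! * (b 0).coeff 0 := by
  have hx0 : constantCoeff x = 0 := X_dvd_iff.mp hx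
  rw [← constantCoeff_apply, map_schurSum, schurSum, Finset.sum_eq_single 0]
  · simp
  · intro i _ hi
    rw [hx0, zero_pow hi, mul_zero]
  · simp

end SchurSum

section SchurSumWeight

open scoped Nat

variable {O : Type*} [CommRing O] [IsDomain O] {p k n : ℕ} [Fact p.Prime]

theorem emultiplicity_natCast_eq_padicValNat (hp : Prime (p : O)) {m : ℕ} (hm : m ≠ 0) :
    emultiplicity (p : O) m = padicValNat p m := by
  have hpp : p.Prime := Fact.out
  obtain ⟨e, u, hpu, rfl⟩ := Nat.exists_eq_pow_mul_and_not_dvd hm p hpp.ne_one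
  have hpuO : ¬ (p : O) ∣ u := fun h ↦ hp.not_isUnit
    ((((Nat.Prime.coprime_iff_not_dvd hpp).mpr hpu).cast (R := O)).isUnit_of_dvd' dvd_rfl h)
  have hu : u ≠ 0 := fun h ↦ hpu (h ▸ dvd_zero p)
  rw [padicValNat.mul (pow_ne_zero e hpp.ne_zero) hu, padicValNat.prime_pow,
    padicValNat.eq_zero_of_not_dvd hpu, Nat.cast_mul, Nat.cast_pow, emultiplicity_mul hp,
    emultiplicity_pow_self_of_prime hp, emultiplicity_eq_zero.mpr hpuO, add_zero, add_zero]

theorem mul_padicValNat_factorial_lt {i j : ℕ} (hkp : k < p) (hj : 0 < j) (hij : i ≤ j) :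
    k * padicValNat p i ! < j := by
  rcases i.eq_zero_or_pos with rfl | hi
  · simpa using hj
  · calc k * padicValNat p i ! ≤ (p - 1) * padicValNat p i ! :=
          Nat.mul_le_mul_right _ (Nat.le_sub_one_of_lt hkp)
      _ < i := sub_one_mul_padicValNat_factorial_lt_of_ne_zero p hi.ne'
      _ ≤ j := hij

theorem mul_emultiplicity_factorial_lt (hp : Prime (p : O)) (hkp : k < p) {i j : ℕ}
    (hin : i ≤ n) (hij : i ≤ j) (hj : 0 < j) :
    k * emultiplicity (p : O) (n ! : ℕ) < k * emultiplicity (p : O) (n ! / i ! : ℕ) + j := by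
  have hdvd := Nat.factorial_dvd_factorial hin
  have hpos := Nat.div_pos (Nat.factorial_le hin) i.factorial_pos
  have hadd : padicValNat p n ! = padicValNat p (n ! / i !) + padicValNat p i ! := by
    rw [← padicValNat.mul hpos.ne' i.factorial_ne_zero, Nat.div_mul_cancel hdvd]
  have hlt := mul_padicValNat_factorial_lt hkp hj hij
  rw [emultiplicity_natCast_eq_padicValNat hp n.factorial_ne_zero,
    emultiplicity_natCast_eq_padicValNat hp hpos.ne', hadd]
  norm_cast
  rw [mul_add]
  lia

theorem newtonWeight_schurSum_zero_lt (hp : Prime (p : O)) (hk : 0 < k) (hkp : k < p) {x : O[X]}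
    (hx : X ∣ x) {b : ℕ → O[X]} (hb0 : ¬ (p : O) ∣ (b 0).coeff 0) {j : ℕ} (hj : 0 < j) :
    newtonWeight (p : O) k (schurSum n x b) 0 < newtonWeight (p : O) k (schurSum n x b) j := by
  have hzero : newtonWeight (p : O) k (schurSum n x b) 0 =
      k * emultiplicity (p : O) (n ! : ℕ) := by
    rw [newtonWeight, coeff_zero_schurSum hx, emultiplicity_mul hp,
      emultiplicity_eq_zero.mpr hb0, add_zero, Nat.cast_zero, add_zero]
  obtain ⟨i, hi, hle⟩ := exists_newtonWeight_le_newtonWeight_sum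
    (Finset.nonempty_range_add_one (n := n)) (p : O) k
    (fun i ↦ ((n ! / i ! : ℕ) : O[X]) * b i * x ^ i) j
  refine hzero.trans_lt (lt_of_lt_of_le ?_ hle)
  have hin : i ≤ n := Finset.mem_range_succ_iff.mp hi
  rw [newtonWeight, mul_assoc, ← C_eq_natCast, coeff_C_mul]
  rcases le_or_gt i j with hij | hij
  · refine (mul_emultiplicity_factorial_lt hp hkp hin hij hj).trans_le ?_
    gcongr
    exact emultiplicity_le_emultiplicity_of_dvd_right (dvd_mul_right _ _)
  · have hcoeff : (b i * x ^ i).coeff j = 0 :=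
      X_pow_dvd_iff.mp ((pow_dvd_pow_of_dvd hx i).mul_left _) j hij
    rw [hcoeff, mul_zero, emultiplicity_zero, ENat.mul_top (by exact_mod_cast hk.ne'), top_add,
      emultiplicity_natCast_eq_padicValNat hp n.factorial_ne_zero]
    exact_mod_cast ENat.natCast_lt_top _

end SchurSumWeight

section FactorDegrees

variable {K : Type*} [Field K] {φ G H : K[X]} {n : ℕ}

theorem dvd_of_pow_dvd_mul_of_natDegree_lt (hφ : Irreducible φ) (hdvd : φ ^ n ∣ G * H)
    (hH : H ≠ 0) (hdeg : H.natDegree < n * φ.natDegree) : φ ∣ G := by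
  by_contra hG
  refine hdeg.not_ge ?_
  rw [← natDegree_pow]
  exact natDegree_le_of_dvd (hφ.prime.pow_dvd_of_dvd_mul_left _ hG hdvd) hH

theorem natDegree_dvd_natDegree_of_pow_dvd_mul (hφ : Irreducible φ) (hdvd : φ ^ n ∣ G * H)
    (hGH : G * H ≠ 0) (hdeg : (G * H).natDegree ≤ n * φ.natDegree) :
    φ.natDegree ∣ G.natDegree := by
  have hassoc : Associated (φ ^ n) (G * H) :=
    associated_of_dvd_of_natDegree_le hdvd hGH (by rwa [natDegree_pow])
  obtain ⟨k, _, hk⟩ := (dvd_prime_pow hφ.prime n).mp (hassoc.dvd_iff_dvd_right.mpr ⟨H, rfl⟩)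
  rw [natDegree_eq_of_degree_eq (degree_eq_degree_of_associated hk), natDegree_pow]
  exact dvd_mul_left _ _

end FactorDegrees

section LocalFactorization

variable {R K : Type*} [CommRing R] [Field K] {f : R →+* K} {p n k : ℕ} {φ G H : R[X]}
  {b : ℕ → R[X]}

theorem map_pow_dvd_map_schurSum (hp : f p = 0) (hkn : k ≤ n) (hpnk : p ∣ n.choose k) :
    φ.map f ^ (n - k + 1) ∣ (schurSum n φ b).map f := by
  have hpK : (p : K[X]) = 0 := by rw [← C_eq_natCast, ← map_natCast f, hp, C_0]
  rw [← coe_mapRingHom, map_schurSum]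
  exact pow_dvd_schurSum hkn hpnk hpK _ _

theorem map_dvd_map_of_mul_eq_schurSum (hp : f p = 0) (hφ : Irreducible (φ.map f))
    (hkn : k ≤ n) (hpnk : p ∣ n.choose k) (hGH : G * H = schurSum n φ b) (hH : H.map f ≠ 0)
    (hHdeg : (H.map f).natDegree < (n - k + 1) * (φ.map f).natDegree) :
    φ.map f ∣ G.map f := by
  have hdvd := map_pow_dvd_map_schurSum (φ := φ) (b := b) hp hkn hpnk
  rw [← hGH, Polynomial.map_mul] at hdvd
  exact dvd_of_pow_dvd_mul_of_natDegree_lt hφ hdvd hH hHdeg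

theorem natDegree_map_dvd_natDegree_map_of_mul_eq_schurSum (hp : f p = 0)
    (hφ : Irreducible (φ.map f)) (hn : 0 < n) (hpn : p ∣ n) (hGH : G * H = schurSum n φ b)
    (hne : (G * H).map f ≠ 0) (hdeg : ((G * H).map f).natDegree ≤ n * (φ.map f).natDegree) :
    (φ.map f).natDegree ∣ (G.map f).natDegree := by
  have hdvd := map_pow_dvd_map_schurSum (φ := φ) (b := b) hp hn (by rwa [n.choose_one_right])
  rw [Nat.sub_add_cancel hn, ← hGH] at hdvd
  rw [Polynomial.map_mul] at hdvd hne hdeg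
  exact natDegree_dvd_natDegree_of_pow_dvd_mul hφ hdvd hne hdeg

variable [IsDomain R] [UniqueFactorizationMonoid R] [PerfectField K] [Fact p.Prime]

theorem mul_natDegree_lt_of_mul_eq_schurSum (hf : Function.Surjective f)
    (hker : RingHom.ker f = Ideal.span {(p : R)}) (hp0 : (p : R) ≠ 0) (hm : φ.Monic)
    (hφ : Irreducible (φ.map f)) (hb0 : ¬ φ.map f ∣ (b 0).map f) (hk : 0 < k) (hkp : k < p)
    (hkn : k ≤ n) (hpnk : p ∣ n.choose k) (hGH : G * H = schurSum n φ b) (hG : G.map f ≠ 0)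
    (hH : H.map f ≠ 0) (hHdeg : (H.map f).natDegree < (n - k + 1) * (φ.map f).natDegree) :
    k * (φ.map f).natDegree < (G.map f).natDegree := by
  have hdom : IsDomain (AdjoinRoot φ) :=
    AdjoinRoot.isDomain_of_prime (hm.irreducible_of_irreducible_map f φ hφ).prime
  have hof : AdjoinRoot.of φ p = p := map_natCast _ p
  have hprime : Prime (p : AdjoinRoot φ) := hof ▸ prime_of_of_irreducible_map hf hker hp0 hm hφ
  have hweight : ∀ j > 0, newtonWeight (p : AdjoinRoot φ) k (rootTaylor φ (G * H)) 0 <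
      newtonWeight (p : AdjoinRoot φ) k (rootTaylor φ (G * H)) j := fun j hj ↦ by
    rw [hGH, map_schurSum]
    refine newtonWeight_schurSum_zero_lt hprime hk hkp (X_dvd_rootTaylor_self φ) ?_ hj
    rwa [Function.comp_apply, coeff_zero_rootTaylor, ← hof, of_dvd_mk_iff hf hker]
  have hG0 : (p : AdjoinRoot φ) ∣ (rootTaylor φ G).coeff 0 := by
    have hp : f p = 0 := by
      rw [← RingHom.mem_ker, hker]
      exact Ideal.mem_span_singleton_self _
    rw [coeff_zero_rootTaylor, ← hof, of_dvd_mk_iff hf hker]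
    exact map_dvd_map_of_mul_eq_schurSum hp hφ hkn hpnk hGH hH hHdeg
  obtain ⟨s, hsdeg, hs⟩ := exists_coeff_rootTaylor_ne_zero hφ hG
  by_contra! hdeg
  have hsk : s ≤ k := Nat.le_of_mul_le_mul_right (hsdeg.trans hdeg) hφ.natDegree_pos
  rw [map_mul] at hweight
  refine hs ?_
  rw [← map_rootTaylor, coeff_map, ← of_dvd_iff_adjoinRootMap_eq_zero hf hker, hof]
  exact dvd_coeff_of_dvd_coeff_zero (newtonWeight_zero_lt_of_mul hprime hweight) hG0 hsk

end LocalFactorization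

section Gauss

theorem irreducible_map_of_forall_natDegree_eq_zero {R K : Type*} [CommRing R] [IsDomain R]
    [NormalizedGCDMonoid R] [Field K] [Algebra R K] [IsFractionRing R K] {F : R[X]}
    (hF : 0 < F.natDegree) (h : ∀ G H, G * H = F → G.natDegree = 0 ∨ H.natDegree = 0) :
    Irreducible (F.map (algebraMap R K)) := by
  have hc : F.content ≠ 0 := by
    rw [Ne, content_eq_zero_iff]
    exact ne_zero_of_natDegree_gt hF
  have hprim := F.isPrimitive_primPart
  have isUnit_of_dvd {Q : R[X]} (hQ : Q ∣ F.primPart) (hQ0 : Q.natDegree = 0) : IsUnit Q := by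
    rw [eq_C_of_natDegree_eq_zero hQ0] at hQ ⊢
    exact isUnit_C.mpr (hprim _ hQ)
  have hirr : Irreducible F.primPart := by
    refine ⟨fun hu ↦ ?_, fun G H hGH ↦ ?_⟩
    · exact hF.ne' (F.natDegree_primPart ▸ natDegree_eq_zero_of_isUnit hu)
    · have hfac : C F.content * G * H = F := by
        rw [mul_assoc, ← hGH, ← eq_C_content_mul_primPart]
      rcases h _ _ hfac with hG | hH
      · rw [natDegree_C_mul hc] at hG
        exact .inl (isUnit_of_dvd ⟨H, hGH⟩ hG)
      · exact .inr (isUnit_of_dvd ⟨G, hGH.trans (mul_comm _ _)⟩ hH)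
  have hcK : IsUnit (C (algebraMap R K F.content)) :=
    isUnit_C.mpr ((map_ne_zero_iff _ (IsFractionRing.injective R K)).mpr hc).isUnit
  rw [F.eq_C_content_mul_primPart, Polynomial.map_mul, map_C, irreducible_isUnit_mul hcK]
  exact hprim.irreducible_iff_irreducible_map_fraction_map.mp hirr

end Gauss

section GlobalFactorization

theorem map_ne_zero_of_map_leadingCoeff_ne_zero {R S : Type*} [Semiring R] [Semiring S]
    {f : R →+* S} {G : R[X]} (h : f G.leadingCoeff ≠ 0) : G.map f ≠ 0 := by
  rwa [← leadingCoeff_ne_zero, leadingCoeff_map_of_leadingCoeff_ne_zero f h]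

theorem le_of_prime_dvd_choose {p n k : ℕ} (hp : p.Prime) (hkn : k ≤ n) (h : p ∣ n.choose k) :
    p ≤ n := by
  refine hp.dvd_factorial.mp (h.trans ?_)
  rw [← Nat.choose_mul_factorial_mul_factorial hkn, mul_assoc]
  exact dvd_mul_right _ _

variable {n : ℕ} {φ G H : ℤ[X]} {b : ℕ → ℤ[X]}

theorem natDegree_eq_zero_of_mul_eq_schurSum_of_le (hm : φ.Monic)
    (hφ : ∀ p : ℕ, p.Prime → p ≤ n → Irreducible (φ.map (Int.castRingHom (ZMod p))))
    (hb0 : ∀ p : ℕ, p.Prime → p ≤ n →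
      ¬ φ.map (Int.castRingHom (ZMod p)) ∣ (b 0).map (Int.castRingHom (ZMod p)))
    (hlc : ∀ p : ℕ, p.Prime → p ≤ n → Int.castRingHom (ZMod p) (G * H).leadingCoeff ≠ 0)
    (hGH : G * H = schurSum n φ b) (hdeg : G.natDegree + H.natDegree = n * φ.natDegree)
    (hdvd : φ.natDegree ∣ G.natDegree) (hle : G.natDegree ≤ H.natDegree) : G.natDegree = 0 := by
  obtain ⟨k, hk⟩ := hdvd
  by_contra hG0
  have hd : 0 < φ.natDegree := by
    by_contra! hd
    exact hG0 (by rw [hk, Nat.le_zero.mp hd, zero_mul])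
  have hk0 : 0 < k := by
    by_contra! hk0
    exact hG0 (by rw [hk, Nat.le_zero.mp hk0, mul_zero])
  have hkn : 2 * k ≤ n := Nat.le_of_mul_le_mul_right (by linarith) hd
  obtain ⟨p, hp, hkp, hpnk⟩ := exists_prime_dvd_choose hk0 hkn
  have hpn := le_of_prime_dvd_choose hp (by lia) hpnk
  have := Fact.mk hp
  have hlcp := hlc p hp hpn
  rw [leadingCoeff_mul, map_mul] at hlcp
  have hlcG := left_ne_zero_of_mul hlcp
  have hlcH := right_ne_zero_of_mul hlcp
  have hHdeg : H.natDegree < (n - k + 1) * φ.natDegree := by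
    have : (n - k + k) * φ.natDegree = n * φ.natDegree := by rw [Nat.sub_add_cancel (by lia)]
    linarith
  have hlt := mul_natDegree_lt_of_mul_eq_schurSum (f := Int.castRingHom (ZMod p))
    (ZMod.ringHom_surjective _) (ZMod.ker_intCastRingHom p) (by exact_mod_cast hp.ne_zero) hm
    (hφ p hp hpn) (hb0 p hp hpn) hk0 hkp (by lia) hpnk hGH
    (map_ne_zero_of_map_leadingCoeff_ne_zero hlcG) (map_ne_zero_of_map_leadingCoeff_ne_zero hlcH)
    (by rwa [natDegree_map_of_leadingCoeff_ne_zero _ hlcH, hm.natDegree_map])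
  rw [natDegree_map_of_leadingCoeff_ne_zero _ hlcG, hm.natDegree_map, hk, mul_comm] at hlt
  exact lt_irrefl _ hlt

theorem natDegree_dvd_natDegree_of_mul_eq_schurSum {q : ℕ} (hq : q.Prime) (hn : 0 < n)
    (hqn : q ∣ n) (hm : φ.Monic) (hφ : Irreducible (φ.map (Int.castRingHom (ZMod q))))
    (hlc : Int.castRingHom (ZMod q) (G * H).leadingCoeff ≠ 0) (hGH : G * H = schurSum n φ b)
    (hdeg : (G * H).natDegree = n * φ.natDegree) : φ.natDegree ∣ G.natDegree := by
  have := Fact.mk hq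
  have hdvd := natDegree_map_dvd_natDegree_map_of_mul_eq_schurSum
    (f := Int.castRingHom (ZMod q)) (by simp) hφ hn hqn hGH
    (map_ne_zero_of_map_leadingCoeff_ne_zero hlc)
    (by rw [natDegree_map_of_leadingCoeff_ne_zero _ hlc, hdeg, hm.natDegree_map])
  rw [leadingCoeff_mul, map_mul] at hlc
  rwa [natDegree_map_of_leadingCoeff_ne_zero _ (left_ne_zero_of_mul hlc), hm.natDegree_map]
    at hdvd

theorem natDegree_eq_zero_or_of_mul_eq_schurSum (hn : 2 ≤ n) (hm : φ.Monic)
    (hφ : ∀ p : ℕ, p.Prime → p ≤ n → Irreducible (φ.map (Int.castRingHom (ZMod p))))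
    (hb0 : ∀ p : ℕ, p.Prime → p ≤ n →
      ¬ φ.map (Int.castRingHom (ZMod p)) ∣ (b 0).map (Int.castRingHom (ZMod p)))
    (hlc : ∀ p : ℕ, p.Prime → p ≤ n →
      Int.castRingHom (ZMod p) (schurSum n φ b).leadingCoeff ≠ 0)
    (hdeg : (schurSum n φ b).natDegree = n * φ.natDegree) (hGH : G * H = schurSum n φ b) :
    G.natDegree = 0 ∨ H.natDegree = 0 := by
  have hq := Nat.minFac_prime (n := n) (by lia)
  have hqn := Nat.minFac_le (n := n) (by lia)
  have hHG : H * G = schurSum n φ b := (mul_comm H G).trans hGH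
  have hdvd : ∀ {G H : ℤ[X]}, G * H = schurSum n φ b → φ.natDegree ∣ G.natDegree := fun h ↦
    natDegree_dvd_natDegree_of_mul_eq_schurSum hq (by lia) n.minFac_dvd hm (hφ _ hq hqn)
      (h ▸ hlc _ hq hqn) h (h ▸ hdeg)
  have hne : G * H ≠ 0 := by
    rw [hGH, ← leadingCoeff_ne_zero]
    exact fun h ↦ hlc _ hq hqn (by rw [h, map_zero])
  have hadd : G.natDegree + H.natDegree = n * φ.natDegree := by
    rw [← natDegree_mul (left_ne_zero_of_mul hne) (right_ne_zero_of_mul hne), hGH, hdeg]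
  rcases le_total G.natDegree H.natDegree with hle | hle
  · exact .inl (natDegree_eq_zero_of_mul_eq_schurSum_of_le hm hφ hb0 (hGH ▸ hlc) hGH hadd
      (hdvd hGH) hle)
  · exact .inr (natDegree_eq_zero_of_mul_eq_schurSum_of_le hm hφ hb0 (hHG ▸ hlc) hHG
      ((add_comm _ _).trans hadd) (hdvd hHG) hle)

end GlobalFactorization

section LeadingTerm

variable {R : Type*} [CommRing R] {n : ℕ} {φ : R[X]}

theorem sum_add_eq_schurSum_update (n : ℕ) (φ : R[X]) (a : ℕ → R[X]) (c : R[X]) :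
    ∑ i ∈ Finset.range n, C ((n.factorial / i.factorial : ℕ) : R) * a i * φ ^ i + c * φ ^ n =
      schurSum n φ (Function.update a n c) := by
  rw [schurSum, Finset.sum_range_succ, Function.update_self, Nat.div_self n.factorial_pos,
    Nat.cast_one, one_mul]
  congr 1
  refine Finset.sum_congr rfl fun i hi ↦ ?_
  rw [Function.update_of_ne (Finset.mem_range.mp hi).ne, C_eq_natCast]

variable {a : ℕ → R[X]} {c : R}

theorem degree_sum_C_mul_lt {ι : Type*} {s : Finset ι} {r : ι → R} {g : ι → R[X]}
    {d : WithBot ℕ} (hd : ⊥ < d) (hg : ∀ i ∈ s, (g i).degree < d) :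
    (∑ i ∈ s, C (r i) * g i).degree < d := by
  refine (degree_sum_le _ _).trans_lt ((Finset.sup_lt_iff hd).mpr fun i hi ↦ ?_)
  refine lt_of_le_of_lt ?_ (hg i hi)
  rw [← smul_eq_C_mul]
  exact degree_smul_le _ _

theorem degree_C_mul_of_monic {g : R[X]} (hg : g.Monic) (hc : c ≠ 0) :
    (C c * g).degree = g.degree := by
  rw [hg.degree_mul, degree_C hc, zero_add]

theorem degree_sum_lt_degree_C_mul_pow (hm : φ.Monic) (hc : c ≠ 0)
    (hdeg : ∀ i < n, (a i * φ ^ i).degree < (φ ^ n).degree) :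
    (∑ i ∈ Finset.range n, C ((n.factorial / i.factorial : ℕ) : R) * a i * φ ^ i).degree <
      (C c * φ ^ n).degree := by
  have := nontrivial_of_ne c 0 hc
  simp only [degree_C_mul_of_monic (hm.pow n) hc, mul_assoc]
  exact degree_sum_C_mul_lt (bot_lt_iff_ne_bot.mpr (degree_ne_bot.mpr (hm.pow n).ne_zero))
    fun i hi ↦ hdeg i (Finset.mem_range.mp hi)

theorem leadingCoeff_schurSum_update (hm : φ.Monic) (hc : c ≠ 0)
    (hdeg : ∀ i < n, (a i * φ ^ i).degree < (φ ^ n).degree) :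
    (schurSum n φ (Function.update a n (C c))).leadingCoeff = c := by
  rw [← sum_add_eq_schurSum_update,
    leadingCoeff_add_of_degree_lt (degree_sum_lt_degree_C_mul_pow hm hc hdeg),
    leadingCoeff_mul_monic (hm.pow n), leadingCoeff_C]

theorem natDegree_schurSum_update (hm : φ.Monic) (hc : c ≠ 0)
    (hdeg : ∀ i < n, (a i * φ ^ i).degree < (φ ^ n).degree) :
    (schurSum n φ (Function.update a n (C c))).natDegree = n * φ.natDegree := by
  rw [← sum_add_eq_schurSum_update, ← hm.natDegree_pow]
  refine natDegree_eq_of_degree_eq ?_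
  rw [degree_add_eq_right_of_degree_lt (degree_sum_lt_degree_C_mul_pow hm hc hdeg),
    degree_C_mul_of_monic (hm.pow n) hc]

theorem degree_mul_pow_lt [NoZeroDivisors R] {g : R[X]} {i : ℕ} (hi : i < n)
    (h : g.degree < φ.degree) : (g * φ ^ i).degree < (φ ^ n).degree := by
  have hφ : φ ≠ 0 := ne_zero_of_degree_gt h
  have := nontrivial_of_ne φ 0 hφ
  calc (g * φ ^ i).degree < (φ * φ ^ i).degree := by
        rw [degree_mul, degree_mul]
        exact WithBot.add_lt_add_right (degree_ne_bot.mpr (pow_ne_zero i hφ)) h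
    _ = (φ ^ (i + 1)).degree := by rw [pow_succ']
    _ ≤ (φ ^ n).degree := degree_le_of_dvd (pow_dvd_pow φ hi) (pow_ne_zero n hφ)

end LeadingTerm

section CoprimeContent

variable {n : ℕ} {φ a : ℤ[X]}

theorem intCast_ne_zero_of_isCoprime_factorial {z : ℤ} {p : ℕ} (hz : IsCoprime z (n.factorial : ℤ))
    (hp : p.Prime) (hpn : p ≤ n) : (z : ZMod p) ≠ 0 := by
  rw [Ne, ZMod.intCast_zmod_eq_zero_iff_dvd]
  intro hdvd
  have hfact : (p : ℤ) ∣ n.factorial := by exact_mod_cast hp.dvd_factorial.mpr hpn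
  exact (Nat.prime_iff_prime_int.mp hp).not_isUnit (hz.isUnit_of_dvd' hdvd hfact)

theorem map_not_dvd_map_of_isCoprime_content {p : ℕ} (hm : φ.Monic) (hdeg : a.degree < φ.degree)
    (ha : IsCoprime a.content (n.factorial : ℤ)) (hp : p.Prime) (hpn : p ≤ n) :
    ¬ φ.map (Int.castRingHom (ZMod p)) ∣ a.map (Int.castRingHom (ZMod p)) := by
  have := Fact.mk hp
  have hne : a.map (Int.castRingHom (ZMod p)) ≠ 0 := by
    rw [Ne, ← C_dvd_iff_map_eq_zero (ZMod.ker_intCastRingHom p), ← dvd_content_iff_C_dvd,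
      ← ZMod.intCast_zmod_eq_zero_iff_dvd]
    exact intCast_ne_zero_of_isCoprime_factorial ha hp hpn
  refine not_dvd_of_degree_lt hne (degree_map_le.trans_lt ?_)
  rwa [hm.degree_map]

end CoprimeContent

end SchurExtension

theorem schur_extension_general (n : ℕ) (hn : 2 ≤ n) (φ : ℤ[X]) (hφmonic : φ.Monic)
    (hφirr : ∀ p : ℕ, p.Prime → p ≤ n → Irreducible (φ.map (Int.castRingHom (ZMod p))))
    (a : ℕ → ℤ[X]) (an : ℤ)
    (hdeg : ∀ i < n, (a i * φ ^ i).degree < (φ ^ n).degree)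
    (han : IsCoprime an (n.factorial : ℤ))
    (ha0 : ∀ p : ℕ, p.Prime → p ≤ n →
      ¬ φ.map (Int.castRingHom (ZMod p)) ∣ (a 0).map (Int.castRingHom (ZMod p))) :
    Irreducible ((∑ i ∈ Finset.range n,
        C ((n.factorial / i.factorial : ℕ) : ℤ) * a i * φ ^ i
      + C an * φ ^ n).map (Int.castRingHom ℚ)) := by
  have hanp := fun p : ℕ ↦ SchurExtension.intCast_ne_zero_of_isCoprime_factorial (p := p) han
  have han0 : an ≠ 0 := fun h ↦ hanp 2 Nat.prime_two hn (by rw [h, Int.cast_zero])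
  have hnatDegree := SchurExtension.natDegree_schurSum_update hφmonic han0 hdeg
  have hpos : 0 < φ.natDegree := by
    have := Fact.mk Nat.prime_two
    exact hφmonic.natDegree_map (Int.castRingHom (ZMod 2)) ▸
      (hφirr 2 Nat.prime_two hn).natDegree_pos
  rw [SchurExtension.sum_add_eq_schurSum_update]
  refine SchurExtension.irreducible_map_of_forall_natDegree_eq_zero
    (hnatDegree ▸ Nat.mul_pos (by lia) hpos) fun G H hGH ↦
      SchurExtension.natDegree_eq_zero_or_of_mul_eq_schurSum hn hφmonic hφirr ?_ ?_ hnatDegree hGH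
  · rwa [Function.update_of_ne (by lia)]
  · rwa [SchurExtension.leadingCoeff_schurSum_update hφmonic han0 hdeg]

/-- **An extension of Schur's irreducibility result.**
Let `n ≥ 2` and let `φ ∈ ℤ[x]` be monic and irreducible modulo every prime `p ≤ n`.
Let `a 0, …, a (n-1) ∈ ℤ[x]` have degree `< deg φ` and let `an ∈ ℤ`. If `an` and the
content of `a 0` are coprime with `n!`, then
`∑_{i<n} (n!/i!)·(a i)·φ^i + an·φ^n` is irreducible over `ℚ`. -/
theorem schur_extension (n : ℕ) (hn : 2 ≤ n) (φ : ℤ[X]) (hφmonic : φ.Monic)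
    (hφirr : ∀ p : ℕ, p.Prime → p ≤ n → Irreducible (φ.map (Int.castRingHom (ZMod p))))
    (a : ℕ → ℤ[X]) (an : ℤ)
    (hdeg : ∀ i < n, (a i).degree < φ.degree)
    (han : IsCoprime an (n.factorial : ℤ))
    (ha0 : IsCoprime ((a 0).content) (n.factorial : ℤ)) :
    Irreducible ((∑ i ∈ Finset.range n,
        C ((n.factorial / i.factorial : ℕ) : ℤ) * a i * φ ^ i
      + C an * φ ^ n).map (Int.castRingHom ℚ)) :=
  schur_extension_general n hn φ hφmonic hφirr a an
    (fun i hi ↦ SchurExtension.degree_mul_pow_lt hi (hdeg i hi)) han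
    fun _ ↦ SchurExtension.map_not_dvd_map_of_isCoprime_content hφmonic (hdeg 0 (by lia)) ha0
end

section
/- Let n ≥ 2 be an integer and let φ ∈ ℤ[x] be a monic polynomial whose reduction modulo p is irreducible in 𝔽_p[x] for every prime p dividing n. Let a_0(x), a_1(x), …, a_{n−1}(x) ∈ ℤ[x] be polynomials each of degree strictly less than deg φ, and assume that the content of the product Π_{i=0}^{n−1} a_i(x) is coprime to n (in particular each a_i(x) ≠ 0). Then the polynomial Σ_{i=0}^{n−1} (n!/i!)·a_i(x)·φ(x)^i + φ(x)^n is irreducible in ℚ[x] (equivalently, Σ_{i=0}^{n−1} a_i(x)·φ(x)^i/i! + φ(x)^n/n! is irreducible over ℚ). -/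
open Polynomial

/-!
Let `θ` be a root of the polynomial in a number field, and let `P` be a prime of its ring of
integers over a prime `p ∣ n`, with ramification index `e`. The coefficients `n!/i!` with `i < n`
are divisible by `p`, so `φ(θ) ∈ P`. Hence the reduction of `φ` is the minimal polynomial of `θ` in
the residue field: `deg φ` divides the inertia degree of `P`, and every `a_i(θ)` is a unit at `P`.

By Legendre's formula, `p - 1` times the valuation at `P` of the `i`-th term is then, up to a
constant, `e s(i) - β i`, where `s` is the sum of the base-`p` digits and `β` is independent of `i`.
As the terms add up to zero, the minimum over `0 ≤ i ≤ n` is attained at two indices `i < j`. Let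
`p^t` be the largest power of `p` dividing `j`. Clearing the lowest nonzero digit of `j` cannot
decrease the functional, which forces `e ≤ β p^t`; rounding `i` up to a multiple of `p^t`, which
does not exceed `j`, gives `β p^t ≤ e`. If `p^k ∣ n`, rounding `i` up to a multiple of `p^k`, which
does not exceed `n`, likewise gives `β p^k ≤ e = β p^t`. So `k ≤ t` and `p^k ∣ e`.

Summing `e f` over all `P ∣ p` shows that `p^k deg φ` divides the degree of every number field
containing a root, hence so does `n deg φ`, the degree of the polynomial.
-/

section DigitCost

variable {b : ℕ}

lemma sum_digits_base_mul_add (hb : 1 < b) (m : ℕ) {d : ℕ} (hd : d < b) :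
    (b.digits (b * m + d)).sum = (b.digits m).sum + d := by
  by_cases hzero : d = 0 ∧ m = 0
  · simp [hzero]
  · rw [add_comm, Nat.digits_add b hb d m hd (by tauto), List.sum_cons, add_comm]

lemma sum_digits_pow_mul_add (hb : 1 < b) (t m : ℕ) {r : ℕ} (hr : r < b ^ t) :
    (b.digits (b ^ t * m + r)).sum = (b.digits m).sum + (b.digits r).sum := by
  induction t generalizing r with
  | zero => simp_all
  | succ t ih =>
    have hmod : r % b < b := Nat.mod_lt r (by lia)
    have hdiv : r / b < b ^ t := Nat.div_lt_of_lt_mul (by rwa [← pow_succ'])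
    calc (b.digits (b ^ (t + 1) * m + r)).sum
        = (b.digits (b * (b ^ t * m + r / b) + r % b)).sum := by
          rw [mul_add, add_assoc, Nat.div_add_mod, ← mul_assoc, ← pow_succ']
      _ = (b.digits m).sum + (b.digits (b * (r / b) + r % b)).sum := by
          rw [sum_digits_base_mul_add hb _ hmod, sum_digits_base_mul_add hb _ hmod, ih hdiv,
            add_assoc]
      _ = (b.digits m).sum + (b.digits r).sum := by rw [Nat.div_add_mod]

lemma sum_digits_succ_le (hb : 1 < b) (m : ℕ) :
    (b.digits (m + 1)).sum ≤ (b.digits m).sum + 1 := by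
  induction m using Nat.strong_induction_on with
  | _ m ih =>
    have hmod : m % b < b := Nat.mod_lt m (by lia)
    have hm : b * (m / b) + m % b = m := Nat.div_add_mod m b
    have hsum := sum_digits_base_mul_add hb (m / b) hmod
    rw [hm] at hsum
    by_cases hcarry : m % b + 1 < b
    · have hsucc := sum_digits_base_mul_add hb (m / b) hcarry
      rw [← add_assoc, hm] at hsucc
      lia
    · have hsucc := sum_digits_base_mul_add hb (m / b + 1) (d := 0) (by lia)
      rw [show b * (m / b + 1) + 0 = m + 1 by rw [mul_add_one]; lia] at hsucc
      have := ih (m / b) (Nat.div_lt_self (by grind) hb)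
      lia

lemma sum_digits_pos (b : ℕ) {m : ℕ} (hm : m ≠ 0) : 0 < (b.digits m).sum := by
  have hlast := List.getLast_mem (Nat.digits_ne_nil_iff_ne_zero (b := b).2 hm)
  exact (Nat.pos_of_ne_zero (Nat.getLast_digit_ne_zero b hm)).trans_le
    (List.single_le_sum (fun _ _ ↦ Nat.zero_le _) _ hlast)

/-- The functional `e s(i) - β i`, where `s(i)` is the sum of the base-`b` digits of `i`. By
Legendre's formula it is `b - 1` times the valuation of `xⁱ / i!` at a prime of ramification index
`e` over a prime number `b`, where `β = e - (b - 1) v(x)`. -/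
def digitCost (b : ℕ) (e β : ℤ) (i : ℕ) : ℤ := e * ((b.digits i).sum : ℕ) - β * i

variable {e β : ℤ} {i j k m n : ℕ}

lemma digitCost_zero_right : digitCost b e β 0 = 0 := by simp [digitCost]

lemma digitCost_pow_mul_add (hb : 1 < b) (t m : ℕ) {r : ℕ} (hr : r < b ^ t) :
    digitCost b e β (b ^ t * m + r) = digitCost b e (β * b ^ t) m + digitCost b e β r := by
  simp only [digitCost, sum_digits_pow_mul_add hb t m hr, Nat.cast_add, Nat.cast_mul, Nat.cast_pow]
  ring

lemma digitCost_pow_mul (hb : 1 < b) (t m : ℕ) :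
    digitCost b e β (b ^ t * m) = digitCost b e (β * b ^ t) m := by
  simpa [digitCost_zero_right] using digitCost_pow_mul_add hb t m (by positivity : 0 < b ^ t)

lemma digitCost_base_mul_add (hb : 1 < b) (m : ℕ) {d : ℕ} (hd : d < b) :
    digitCost b e β (b * m + d) = digitCost b e (β * b) m + (e - β) * d := by
  simp only [digitCost, sum_digits_base_mul_add hb m hd, Nat.cast_add, Nat.cast_mul]
  ring

lemma digitCost_succ_le (hb : 1 < b) (he : 0 ≤ e) (m : ℕ) :
    digitCost b e β (m + 1) ≤ digitCost b e β m + (e - β) := by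
  have hsum : (((b.digits (m + 1)).sum : ℕ) : ℤ) ≤ ((b.digits m).sum : ℕ) + 1 :=
    mod_cast sum_digits_succ_le hb m
  have := mul_le_mul_of_nonneg_left hsum he
  simp only [digitCost, Nat.cast_add, Nat.cast_one]
  linarith

lemma sub_mul_le_digitCost (b : ℕ) (β : ℤ) (he : 0 ≤ e) (hm : m ≠ 0) :
    e - β * m ≤ digitCost b e β m := by
  have hsum : (1 : ℤ) ≤ ((b.digits m).sum : ℕ) := mod_cast sum_digits_pos b hm
  have := mul_le_mul_of_nonneg_left hsum he
  simp only [digitCost]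
  linarith

lemma slope_mul_pow_le_of_isMinOn_digitCost (hb : 1 < b) (he : 0 ≤ e)
    (hmin : IsMinOn (digitCost b e β) (Set.Iic n) i) (him : i < m) (hmn : m ≤ n) {t : ℕ}
    (hm : b ^ t ∣ m) : β * b ^ t ≤ e := by
  have hr : i % b ^ t < b ^ t := Nat.mod_lt i (by positivity)
  have hround : b ^ t * (i / b ^ t + 1) ≤ n := by
    obtain ⟨u, rfl⟩ := hm
    exact (Nat.mul_le_mul_left _ (Nat.div_lt_of_lt_mul him)).trans hmn
  have hcost := isMinOn_iff.1 hmin _ hround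
  rw [digitCost_pow_mul hb] at hcost
  nth_rw 1 [← Nat.div_add_mod i (b ^ t)] at hcost
  rw [digitCost_pow_mul_add hb t _ hr] at hcost
  have hrem : digitCost b e β (i % b ^ t) ≤ e - β * b ^ t := by
    linarith [digitCost_succ_le (β := β * b ^ t) hb he (i / b ^ t)]
  by_cases hzero : i % b ^ t = 0
  · rw [hzero, digitCost_zero_right] at hrem
    linarith
  · have hrZ : ((i % b ^ t : ℕ) : ℤ) < b ^ t := mod_cast hr
    have hβ : β ≤ 0 := by
      have := sub_mul_le_digitCost b β he hzero
      nlinarith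
    exact (mul_nonpos_of_nonpos_of_nonneg hβ (by positivity)).trans he

lemma exists_pow_dvd_le_slope_mul_pow_of_isMinOn_digitCost (hb : 1 < b)
    (hmin : IsMinOn (digitCost b e β) (Set.Iic j) j) (hj : j ≠ 0) :
    ∃ t, b ^ t ∣ j ∧ e ≤ β * b ^ t := by
  obtain ⟨t, w, hw, rfl⟩ := Nat.exists_eq_pow_mul_and_not_dvd hj b hb.ne'
  refine ⟨t, dvd_mul_right _ _, ?_⟩
  have hcost := isMinOn_iff.1 hmin (b ^ t * (b * (w / b) + 0))
    (Nat.mul_le_mul_left _ (Nat.mul_div_le w b))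
  rw [digitCost_pow_mul hb, digitCost_pow_mul hb, digitCost_base_mul_add hb _ (by lia)] at hcost
  nth_rw 1 [← Nat.div_add_mod w b] at hcost
  rw [digitCost_base_mul_add hb _ (Nat.mod_lt w (by lia))] at hcost
  have hdigit : (0 : ℤ) < (w % b : ℕ) := by
    exact_mod_cast Nat.pos_of_ne_zero fun h ↦ hw (Nat.dvd_of_mod_eq_zero h)
  push_cast at hcost hdigit
  nlinarith

theorem pow_dvd_of_isMinOn_digitCost (hb : 1 < b) (he : 0 < e) (hk : b ^ k ∣ n) (hij : i < j)
    (hjn : j ≤ n) (hi : IsMinOn (digitCost b e β) (Set.Iic n) i)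
    (hj : IsMinOn (digitCost b e β) (Set.Iic n) j) : (b : ℤ) ^ k ∣ e := by
  obtain ⟨t, htj, het⟩ := exists_pow_dvd_le_slope_mul_pow_of_isMinOn_digitCost hb
    (hj.on_subset (Set.Iic_subset_Iic.2 hjn)) (by lia)
  have heq : e = β * b ^ t :=
    het.antisymm (slope_mul_pow_le_of_isMinOn_digitCost hb he.le hi hij hjn htj)
  have hβ : 0 < β := pos_of_mul_pos_left (heq ▸ he) (by positivity)
  have hpow : β * b ^ k ≤ β * b ^ t := heq ▸
    slope_mul_pow_le_of_isMinOn_digitCost hb he.le hi (hij.trans_le hjn) le_rfl hk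
  have hkt : k ≤ t := by
    rwa [mul_le_mul_iff_right₀ hβ, pow_le_pow_iff_right₀ (mod_cast hb)] at hpow
  exact heq ▸ (pow_dvd_pow _ hkt).mul_left β

end DigitCost

theorem exists_ne_isMaxOn_of_sum_eq_zero {R Γ₀ ι : Type*} [Ring R]
    [LinearOrderedCommGroupWithZero Γ₀] (v : Valuation R Γ₀) {s : Finset ι} {f : ι → R}
    (hs : ∃ i ∈ s, v (f i) ≠ 0) (hsum : ∑ i ∈ s, f i = 0) :
    ∃ i ∈ s, ∃ j ∈ s, i ≠ j ∧ IsMaxOn (fun i ↦ v (f i)) s i ∧ IsMaxOn (fun i ↦ v (f i)) s j := by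
  classical
  obtain ⟨i₀, hi₀, hne⟩ := hs
  obtain ⟨i, hi, hmax⟩ := s.exists_max_image (fun i ↦ v (f i)) ⟨i₀, hi₀⟩
  obtain ⟨j, hj, hij, hle⟩ : ∃ j ∈ s, j ≠ i ∧ v (f i) ≤ v (f j) := by
    by_contra! hlt
    have hvi : v (f i) = 0 := by
      rw [← v.map_sum_eq_of_lt hi fun j hj ↦ ?_, hsum, map_zero]
      obtain ⟨hjs, hji⟩ := Finset.mem_sdiff.1 hj
      exact hlt j hjs (by simpa using hji)
    exact hne (le_zero_iff.1 (hvi ▸ hmax i₀ hi₀))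
  exact ⟨i, hi, j, hj, hij.symm, fun r hr ↦ hmax r hr, fun r hr ↦ (hmax r hr).trans hle⟩

section Residue

variable {R S : Type*} [CommRing R] [CommRing S] [Algebra R S] (p : Ideal R) (P : Ideal S)
  [P.LiesOver p]

lemma aeval_quotientMk_map_quotientMk (θ : S) (b : R[X]) :
    aeval (Ideal.Quotient.mk P θ) (b.map (Ideal.Quotient.mk p)) =
      Ideal.Quotient.mk P (aeval θ b) := by
  rw [aeval_def, eval₂_map, aeval_def, hom_eval₂]
  rfl

variable [p.IsMaximal] {φ : R[X]} {θ : S}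

lemma map_quotientMk_eq_minpoly [P.IsPrime] (hφ : φ.Monic)
    (hirr : Irreducible (φ.map (Ideal.Quotient.mk p))) (hθ : aeval θ φ ∈ P) :
    φ.map (Ideal.Quotient.mk p) =
      letI := Ideal.Quotient.field p; minpoly (R ⧸ p) (Ideal.Quotient.mk P θ) := by
  let := Ideal.Quotient.field p
  refine minpoly.eq_of_irreducible_of_monic hirr ?_ (hφ.map _)
  rw [aeval_quotientMk_map_quotientMk, Ideal.Quotient.eq_zero_iff_mem.2 hθ]

theorem aeval_mem_iff_map_dvd_map [P.IsPrime] (hφ : φ.Monic)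
    (hirr : Irreducible (φ.map (Ideal.Quotient.mk p))) (hθ : aeval θ φ ∈ P) (b : R[X]) :
    aeval θ b ∈ P ↔ φ.map (Ideal.Quotient.mk p) ∣ b.map (Ideal.Quotient.mk p) := by
  let := Ideal.Quotient.field p
  rw [map_quotientMk_eq_minpoly p P hφ hirr hθ, minpoly.dvd_iff, aeval_quotientMk_map_quotientMk,
    Ideal.Quotient.eq_zero_iff_mem]

theorem natDegree_dvd_inertiaDeg [P.IsMaximal] (hφ : φ.Monic)
    (hirr : Irreducible (φ.map (Ideal.Quotient.mk p))) (hθ : aeval θ φ ∈ P) :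
    φ.natDegree ∣ P.inertiaDeg R := by
  let := Ideal.Quotient.field p
  let := Ideal.Quotient.field P
  have hmin := map_quotientMk_eq_minpoly p P hφ hirr hθ
  rw [Ideal.inertiaDeg_eq_of_isMaximal p P, ← hφ.natDegree_map (Ideal.Quotient.mk p), hmin]
  exact minpoly.degree_dvd (minpoly.ne_zero_iff.1 (hmin ▸ hirr.ne_zero))

end Residue

lemma irreducible_map_intCast_zmod_iff (p : ℕ) (b : ℤ[X]) :
    Irreducible (b.map (Int.castRingHom (ZMod p))) ↔
      Irreducible (b.map (Ideal.Quotient.mk (Ideal.span {(p : ℤ)}))) := by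
  rw [← MulEquiv.irreducible_iff (mapEquiv (Int.quotientSpanNatEquivZMod p)), mapEquiv_apply,
    Polynomial.map_map, Int.quotientSpanNatEquivZMod_comp_Quotient_mk]

lemma map_intCast_zmod_dvd_iff (p : ℕ) (b c : ℤ[X]) :
    b.map (Int.castRingHom (ZMod p)) ∣ c.map (Int.castRingHom (ZMod p)) ↔
      b.map (Ideal.Quotient.mk (Ideal.span {(p : ℤ)})) ∣
        c.map (Ideal.Quotient.mk (Ideal.span {(p : ℤ)})) := by
  rw [← map_dvd_iff (mapEquiv (Int.quotientSpanNatEquivZMod p)), mapEquiv_apply, mapEquiv_apply,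
    Polynomial.map_map, Polynomial.map_map, Int.quotientSpanNatEquivZMod_comp_Quotient_mk]

lemma natCast_mem_iff_dvd {S : Type*} [CommRing S] (p : ℕ) (P : Ideal S)
    [P.LiesOver (Ideal.span {(p : ℤ)})] (N : ℕ) : (N : S) ∈ P ↔ p ∣ N := by
  rw [← map_natCast (algebraMap ℤ S), ← Ideal.mem_of_liesOver P (Ideal.span {(p : ℤ)}),
    Ideal.mem_span_singleton, Int.natCast_dvd_natCast]

section Valuation

open WithZero IsDedekindDomain

variable {S : Type*} [CommRing S] [IsDedekindDomain S] [CharZero S] (p : ℕ) [Fact p.Prime]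
  (w : HeightOneSpectrum S) [w.asIdeal.LiesOver (Ideal.span {(p : ℤ)})]

lemma intValuation_natCast_prime :
    w.intValuation (p : S) = exp (-(w.asIdeal.ramificationIdx ℤ : ℤ)) := by
  have hp := Nat.prime_iff_prime_int.1 (Fact.out : p.Prime)
  have hbot : Ideal.span {(p : ℤ)} ≠ ⊥ := by simpa using (Fact.out : p.Prime).ne_zero
  let v : HeightOneSpectrum ℤ :=
    ⟨Ideal.span {(p : ℤ)}, (Ideal.span_singleton_prime hp.ne_zero).2 hp, hbot⟩
  have : w.asIdeal.LiesOver v.asIdeal := ‹_›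
  have hval := v.intValuation_liesOver w (p : ℤ)
  rw [Ideal.ramificationIdx'_eq_ramificationIdx _ _ hbot,
    v.intValuation_singleton hp.ne_zero rfl, ← exp_nsmul] at hval
  simpa using hval.symm

theorem intValuation_natCast {N : ℕ} (hN : N ≠ 0) :
    w.intValuation (N : S) = exp (-(w.asIdeal.ramificationIdx ℤ * padicValNat p N : ℤ)) := by
  obtain ⟨t, u, hu, rfl⟩ := Nat.exists_eq_pow_mul_and_not_dvd hN p (Fact.out : p.Prime).ne_one
  have hval : padicValNat p (p ^ t * u) = t := by
    rw [padicValNat.mul (by simp_all) (by simp_all), padicValNat.prime_pow,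
      padicValNat.eq_zero_of_not_dvd hu, add_zero]
  have hunit : w.intValuation (u : S) = 1 :=
    HeightOneSpectrum.intValuation_eq_one_iff.2 (mt (natCast_mem_iff_dvd p w.asIdeal u).1 hu)
  rw [hval, Nat.cast_mul, Nat.cast_pow, map_mul, map_pow, hunit, mul_one,
    intValuation_natCast_prime p w, ← exp_nsmul]
  simp [mul_comm]

lemma ramificationIdx_int_pos (p : ℕ) [Fact p.Prime] (w : HeightOneSpectrum S)
    [w.asIdeal.LiesOver (Ideal.span {(p : ℤ)})] : 0 < w.asIdeal.ramificationIdx ℤ := by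
  have hmem : (p : S) ∈ w.asIdeal := (natCast_mem_iff_dvd p w.asIdeal p).2 dvd_rfl
  rw [← w.intValuation_lt_one_iff_mem, intValuation_natCast_prime p w, ← exp_zero,
    exp_lt_exp] at hmem
  lia

end Valuation

section SchurSum

open Finset

/-- The `i`-th term `(n!/i!) a_i xⁱ` of `schurSum`; the division of factorials is exact only for
`i ≤ n`. -/
def schurTerm {R : Type*} [CommSemiring R] (n : ℕ) (a : ℕ → R) (x : R) (i : ℕ) : R :=
  ((n.factorial / i.factorial : ℕ) : R) * a i * x ^ i

/-- Schur's generalised exponential sum `∑_{i ≤ n} a_i xⁱ / i!`, multiplied by `n!` so that it makes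
sense over any semiring. -/
def schurSum {R : Type*} [CommSemiring R] (n : ℕ) (a : ℕ → R) (x : R) : R :=
  ∑ i ∈ range (n + 1), schurTerm n a x i

variable {R : Type*}

lemma map_schurSum {R' F : Type*} [CommSemiring R] [CommSemiring R'] [FunLike F R R']
    [RingHomClass F R R'] (f : F) (n : ℕ) (a : ℕ → R) (x : R) :
    f (schurSum n a x) = schurSum n (fun i ↦ f (a i)) (f x) := by
  simp [schurSum, schurTerm]

lemma schurSum_zero_right [CommSemiring R] (n : ℕ) (a : ℕ → R) :
    schurSum n a 0 = (n.factorial : R) * a 0 := by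
  simp [schurSum, schurTerm, sum_range_succ']

lemma ne_zero_of_schurSum_eq_zero [CommRing R] [IsDomain R] [CharZero R] {n : ℕ}
    {a : ℕ → R} (ha : a 0 ≠ 0) {x : R} (hx : schurSum n a x = 0) : x ≠ 0 := by
  rintro rfl
  rw [schurSum_zero_right] at hx
  exact mul_ne_zero (mod_cast n.factorial_ne_zero) ha hx

lemma schurSum_eq_add_pow [CommSemiring R] {n : ℕ} {a : ℕ → R} (ha : a n = 1) (x : R) :
    schurSum n a x = ∑ i ∈ range n, schurTerm n a x i + x ^ n := by
  simp [schurSum, schurTerm, sum_range_succ, ha, Nat.div_self (Nat.factorial_pos n)]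

lemma schurSum_update [CommSemiring R] (n : ℕ) (a : ℕ → R) (x : R) :
    schurSum n (Function.update a n 1) x = ∑ i ∈ range n, schurTerm n a x i + x ^ n := by
  rw [schurSum_eq_add_pow (Function.update_self n 1 a), sum_congr rfl fun i hi ↦ ?_]
  rw [schurTerm, schurTerm, Function.update_of_ne (mem_range.1 hi).ne]

lemma factorial_div_factorial_ne_zero {i n : ℕ} (hi : i ≤ n) : n.factorial / i.factorial ≠ 0 :=
  (Nat.div_pos (Nat.factorial_le hi) i.factorial_pos).ne'

lemma dvd_factorial_div_factorial {i n : ℕ} (hi : i < n) : n ∣ n.factorial / i.factorial := by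
  obtain ⟨n, rfl⟩ : ∃ m, n = m + 1 := ⟨n - 1, by lia⟩
  rw [Nat.factorial_succ, Nat.mul_div_assoc _ (Nat.factorial_dvd_factorial (by lia))]
  exact dvd_mul_right _ _

lemma mem_of_schurSum_mem [CommRing R] {P : Ideal R} [P.IsPrime] {n : ℕ} (hn : (n : R) ∈ P)
    {a : ℕ → R} (ha : a n = 1) {x : R} (hx : schurSum n a x ∈ P) : x ∈ P := by
  rw [schurSum_eq_add_pow ha, P.add_mem_iff_right] at hx
  · exact ‹P.IsPrime›.mem_of_pow_mem n hx
  · refine P.sum_mem fun i hi ↦ P.mul_mem_right _ (P.mul_mem_right _ ?_)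
    exact P.mem_of_dvd (Nat.cast_dvd_cast (dvd_factorial_div_factorial (mem_range.1 hi))) hn

section Polynomial

variable [CommRing R] [Nontrivial R] {n : ℕ} {a : ℕ → R[X]} {φ : R[X]}

lemma degree_sum_schurTerm_lt (hφ : φ.Monic)
    (hdeg : ∀ i < n, (a i * φ ^ i).degree < (φ ^ n).degree) :
    (∑ i ∈ range n, schurTerm n a φ i).degree < (φ ^ n).degree := by
  have hbot : ⊥ < (φ ^ n).degree := bot_lt_iff_ne_bot.2 (degree_ne_bot.2 (hφ.pow n).ne_zero)
  refine (degree_sum_le _ _).trans_lt ((Finset.sup_lt_iff hbot).2 fun i hi ↦ ?_)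
  rw [schurTerm, mul_assoc, ← nsmul_eq_mul]
  exact (degree_smul_le _ _).trans_lt (hdeg i (mem_range.1 hi))

lemma monic_schurSum (hφ : φ.Monic) (ha : a n = 1)
    (hdeg : ∀ i < n, (a i * φ ^ i).degree < (φ ^ n).degree) : (schurSum n a φ).Monic := by
  rw [schurSum_eq_add_pow ha]
  exact (hφ.pow n).add_of_right (degree_sum_schurTerm_lt hφ hdeg)

lemma natDegree_schurSum (hφ : φ.Monic) (ha : a n = 1)
    (hdeg : ∀ i < n, (a i * φ ^ i).degree < (φ ^ n).degree) :
    (schurSum n a φ).natDegree = n * φ.natDegree := by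
  rw [schurSum_eq_add_pow ha,
    natDegree_add_eq_right_of_degree_lt (degree_sum_schurTerm_lt hφ hdeg), hφ.natDegree_pow]

end Polynomial

end SchurSum

section SchurValuation

variable (p : ℕ) [Fact p.Prime]

lemma sub_one_mul_padicValNat_factorial_div_factorial {i n : ℕ} (hi : i ≤ n) :
    ((p : ℤ) - 1) * padicValNat p (n.factorial / i.factorial) =
      (n - (p.digits n).sum) - (i - (p.digits i).sum) := by
  have hdvd : i.factorial ∣ n.factorial := Nat.factorial_dvd_factorial hi
  have hlegendre (m : ℕ) :
      ((p : ℤ) - 1) * padicValNat p m.factorial = m - (p.digits m).sum := by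
    rw [← Nat.cast_sub (Nat.digit_sum_le p m), ← sub_one_mul_padicValNat_factorial, Nat.cast_mul,
      Nat.cast_sub (Fact.out : p.Prime).one_le, Nat.cast_one]
  have hmul : padicValNat p n.factorial =
      padicValNat p (n.factorial / i.factorial) + padicValNat p i.factorial := by
    rw [← padicValNat.mul (factorial_div_factorial_ne_zero hi) i.factorial_ne_zero,
      Nat.div_mul_cancel hdvd]
  rw [← hlegendre, ← hlegendre, hmul]
  push_cast
  ring

lemma sub_one_mul_padicValNat_add_eq_digitCost_add (e l : ℤ) {i n : ℕ} (hi : i ≤ n) :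
    ((p : ℤ) - 1) * (e * padicValNat p (n.factorial / i.factorial) + l * i) =
      digitCost p e (e - (p - 1) * l) i + e * (n - (p.digits n).sum) := by
  rw [mul_add, mul_left_comm, sub_one_mul_padicValNat_factorial_div_factorial p hi, digitCost]
  ring

open WithZero IsDedekindDomain

variable {S : Type*} [CommRing S] [IsDedekindDomain S] [CharZero S]
  (w : HeightOneSpectrum S) [w.asIdeal.LiesOver (Ideal.span {(p : ℤ)})]

lemma intValuation_schurTerm {i n : ℕ} (hi : i ≤ n) {a : ℕ → S} (ha : a i ∉ w.asIdeal) {x : S}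
    {l : ℤ} (hx : w.intValuation x = exp (-l)) :
    w.intValuation (schurTerm n a x i) =
      exp (-(w.asIdeal.ramificationIdx ℤ * padicValNat p (n.factorial / i.factorial) + l * i)) := by
  rw [schurTerm, map_mul, map_mul, map_pow,
    intValuation_natCast p w (factorial_div_factorial_ne_zero hi),
    HeightOneSpectrum.intValuation_eq_one_iff.2 ha, hx, mul_one, ← exp_nsmul, ← exp_add,
    nsmul_eq_mul]
  congr 1
  ring

lemma isMinOn_digitCost_of_isMaxOn_intValuation_schurTerm {n : ℕ} {a : ℕ → S}
    (ha : ∀ i ≤ n, a i ∉ w.asIdeal) {x : S} {l : ℤ} (hx : w.intValuation x = exp (-l)) {i : ℕ}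
    (hi : i ≤ n) (hmax : IsMaxOn (fun j ↦ w.intValuation (schurTerm n a x j)) (Set.Iic n) i) :
    IsMinOn (digitCost p (w.asIdeal.ramificationIdx ℤ)
      (w.asIdeal.ramificationIdx ℤ - (p - 1) * l)) (Set.Iic n) i := by
  intro j hj
  have hp : (0 : ℤ) < p - 1 := sub_pos.2 (mod_cast (Fact.out : p.Prime).one_lt)
  have hle : w.intValuation (schurTerm n a x j) ≤ w.intValuation (schurTerm n a x i) := hmax hj
  rwa [intValuation_schurTerm p w hj (ha j hj) hx, intValuation_schurTerm p w hi (ha i hi) hx,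
    exp_le_exp, neg_le_neg_iff, ← mul_le_mul_iff_right₀ hp,
    sub_one_mul_padicValNat_add_eq_digitCost_add p _ _ hi,
    sub_one_mul_padicValNat_add_eq_digitCost_add p _ _ hj, add_le_add_iff_right] at hle

theorem pow_dvd_ramificationIdx_of_schurSum_eq_zero {k n : ℕ} (hk : p ^ k ∣ n) {a : ℕ → S}
    (ha : ∀ i ≤ n, a i ∉ w.asIdeal) {x : S} (hsum : schurSum n a x = 0) :
    p ^ k ∣ w.asIdeal.ramificationIdx ℤ := by
  have ha0 : a 0 ≠ 0 := fun h ↦ ha 0 n.zero_le (h ▸ zero_mem _)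
  obtain ⟨l, hl⟩ : ∃ l : ℤ, w.intValuation x = exp (-l) :=
    ⟨_, w.intValuation_eq_exp_neg_multiplicity (ne_zero_of_schurSum_eq_zero ha0 hsum)⟩
  have hterm : w.intValuation (schurTerm n a x 0) ≠ 0 :=
    intValuation_schurTerm p w n.zero_le (ha 0 n.zero_le) hl ▸ exp_ne_zero
  obtain ⟨i, hi, j, hj, hij, hmaxi, hmaxj⟩ :=
    exists_ne_isMaxOn_of_sum_eq_zero w.intValuation ⟨0, by simp, hterm⟩ hsum
  have hrange : (Finset.range (n + 1) : Set ℕ) = Set.Iic n := by ext; simp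
  rw [Finset.mem_range_succ_iff] at hi hj
  rw [hrange] at hmaxi hmaxj
  have hmini := isMinOn_digitCost_of_isMaxOn_intValuation_schurTerm p w ha hl hi hmaxi
  have hminj := isMinOn_digitCost_of_isMaxOn_intValuation_schurTerm p w ha hl hj hmaxj
  have he : (0 : ℤ) < w.asIdeal.ramificationIdx ℤ := mod_cast ramificationIdx_int_pos p w
  have hp : 1 < p := (Fact.out : p.Prime).one_lt
  rcases hij.lt_or_gt with hlt | hlt
  · exact_mod_cast pow_dvd_of_isMinOn_digitCost hp he hk hlt hj hmini hminj
  · exact_mod_cast pow_dvd_of_isMinOn_digitCost hp he hk hlt hi hminj hmini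

end SchurValuation

section PrimesOver

variable {S : Type*} [CommRing S] [IsDedekindDomain S] [CharZero S] {p k n : ℕ} [Fact p.Prime]
  {φ : ℤ[X]} {a : ℕ → ℤ[X]} {θ : S}

theorem pow_mul_natDegree_dvd_ramificationIdx_mul_inertiaDeg (hpn : p ∣ n) (hk : p ^ k ∣ n)
    (hφ : φ.Monic) (hirr : Irreducible (φ.map (Int.castRingHom (ZMod p)))) (han : a n = 1)
    (ha : ∀ i < n,
      ¬ φ.map (Int.castRingHom (ZMod p)) ∣ (a i).map (Int.castRingHom (ZMod p)))
    (hθ : aeval θ (schurSum n a φ) = 0) (P : Ideal S) [P.IsPrime]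
    [P.LiesOver (Ideal.span {(p : ℤ)})] :
    p ^ k * φ.natDegree ∣ P.ramificationIdx ℤ * P.inertiaDeg ℤ := by
  have hpmax : (Ideal.span {(p : ℤ)}).IsMaximal := inferInstance
  have hpP : (p : S) ∈ P := (natCast_mem_iff_dvd p P p).2 dvd_rfl
  have hP : P ≠ ⊥ := by
    rintro rfl
    exact Nat.cast_ne_zero.2 (Fact.out : p.Prime).ne_zero (Ideal.mem_bot.1 hpP)
  have hPmax : P.IsMaximal := ‹P.IsPrime›.isMaximal hP
  rw [map_schurSum] at hθ
  rw [irreducible_map_intCast_zmod_iff] at hirr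
  have hφP : aeval θ φ ∈ P :=
    mem_of_schurSum_mem (P := P) ((natCast_mem_iff_dvd p P n).2 hpn) (by simp [han])
      (hθ ▸ P.zero_mem)
  have haP (i : ℕ) (hi : i ≤ n) : aeval θ (a i) ∉ P := by
    rcases hi.lt_or_eq with hi | rfl
    · rw [aeval_mem_iff_map_dvd_map _ P hφ hirr hφP, ← map_intCast_zmod_dvd_iff]
      exact ha i hi
    · rw [han, map_one]
      exact P.one_notMem
  exact mul_dvd_mul (pow_dvd_ramificationIdx_of_schurSum_eq_zero p ⟨P, ‹_›, hP⟩ hk haP hθ)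
    (natDegree_dvd_inertiaDeg _ P hφ hirr hφP)

theorem pow_mul_natDegree_dvd_finrank [Module.Finite ℤ S] (hpn : p ∣ n) (hk : p ^ k ∣ n)
    (hφ : φ.Monic) (hirr : Irreducible (φ.map (Int.castRingHom (ZMod p)))) (han : a n = 1)
    (ha : ∀ i < n,
      ¬ φ.map (Int.castRingHom (ZMod p)) ∣ (a i).map (Int.castRingHom (ZMod p)))
    (hθ : aeval θ (schurSum n a φ) = 0) : p ^ k * φ.natDegree ∣ Module.finrank ℤ S := by
  have := Fintype.ofFinite ((Ideal.span {(p : ℤ)}).primesOver S)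
  rw [← Ideal.sum_ramification_inertia_eq_finrank (Ideal.span {(p : ℤ)}) S]
  refine Finset.dvd_sum fun ⟨P, hprime, hover⟩ _ ↦ ?_
  exact pow_mul_natDegree_dvd_ramificationIdx_mul_inertiaDeg hpn hk hφ hirr han ha hθ P

end PrimesOver

open scoped NumberField in
theorem irreducible_map_of_natDegree_dvd_finrank {F : ℤ[X]} (hF : F.Monic) (hdeg : F.natDegree ≠ 0)
    (hdvd : ∀ (K : Type) [Field K] [NumberField K] (θ : 𝓞 K), aeval θ F = 0 →
      F.natDegree ∣ Module.finrank ℤ (𝓞 K)) : Irreducible (F.map (Int.castRingHom ℚ)) := by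
  have hdegQ : (F.map (Int.castRingHom ℚ)).natDegree = F.natDegree := hF.natDegree_map _
  obtain ⟨g, hg, hgF⟩ := WfDvdMonoid.exists_irreducible_factor
    (not_isUnit_of_natDegree_pos _ (by lia)) (hF.map (Int.castRingHom ℚ)).ne_zero
  have : Fact (Irreducible g) := ⟨hg⟩
  have hroot : aeval (AdjoinRoot.root g) F = 0 := by
    rw [← aeval_map_algebraMap ℚ]
    exact (AdjoinRoot.aeval_eq _).trans (AdjoinRoot.mk_eq_zero.2 hgF)
  let θ : 𝓞 (AdjoinRoot g) := ⟨AdjoinRoot.root g, F, hF, hroot⟩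
  have hθ : aeval θ F = 0 := by
    apply NumberField.RingOfIntegers.coe_injective
    rw [← aeval_algebraMap_apply, map_zero]
    exact hroot
  have hle : F.natDegree ≤ g.natDegree := by
    refine Nat.le_of_dvd hg.natDegree_pos ?_
    rw [← (AdjoinRoot.powerBasis hg.ne_zero).finrank.trans (AdjoinRoot.powerBasis_dim hg.ne_zero),
      ← NumberField.RingOfIntegers.rank]
    exact hdvd _ θ hθ
  exact (associated_of_dvd_of_natDegree_le hgF (hF.map _).ne_zero (hdegQ.trans_le hle)).irreducible
    hg

lemma mul_dvd_of_forall_prime_pow_mul_dvd {m n N : ℕ} (hn : n ≠ 1)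
    (h : ∀ p k, p.Prime → k ≠ 0 → p ^ k ∣ n → p ^ k * m ∣ N) : n * m ∣ N := by
  obtain ⟨p, hp, hpn⟩ := Nat.exists_prime_and_dvd hn
  obtain ⟨N, rfl⟩ : m ∣ N :=
    (Dvd.intro_left _ rfl).trans (h p 1 hp one_ne_zero (by simpa using hpn))
  rcases m.eq_zero_or_pos with rfl | hm
  · simp
  rw [mul_comm m N]
  refine Nat.mul_dvd_mul_right ((Nat.dvd_iff_prime_pow_dvd_dvd _ _).2 fun p k hp hk ↦ ?_) m
  rcases eq_or_ne k 0 with rfl | hk0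
  · simp
  · have := h p k hp hk0 hk
    rwa [mul_comm m N, Nat.mul_dvd_mul_iff_right hm] at this

lemma degree_mul_pow_lt {R : Type*} [CommRing R] [Nontrivial R] {φ b : R[X]} (hφ : φ.Monic)
    (hb : b.degree < φ.degree) {i n : ℕ} (hi : i < n) : (b * φ ^ i).degree < (φ ^ n).degree := by
  calc (b * φ ^ i).degree < (φ ^ (i + 1)).degree := by
        rw [pow_succ', (hφ.pow i).degree_mul, (hφ.pow i).degree_mul]
        exact WithBot.add_lt_add_right (degree_ne_bot.2 (hφ.pow i).ne_zero) hb
    _ ≤ (φ ^ (n - (i + 1)) * φ ^ (i + 1)).degree := by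
        rw [(hφ.pow _).degree_mul]
        exact le_add_of_nonneg_left (zero_le_degree_iff.2 (hφ.pow _).ne_zero)
    _ = (φ ^ n).degree := by rw [← pow_add, Nat.sub_add_cancel hi]

lemma map_intCast_zmod_eq_zero_iff (p : ℕ) (b : ℤ[X]) :
    b.map (Int.castRingHom (ZMod p)) = 0 ↔ C (p : ℤ) ∣ b := by
  simp [Polynomial.ext_iff, C_dvd_iff_dvd_coeff, -map_natCast, -eq_intCast,
    ZMod.intCast_zmod_eq_zero_iff_dvd, coeff_map]

lemma map_intCast_zmod_ne_zero_of_isCoprime_content {b : ℤ[X]} {n p : ℕ} (hp : p ≠ 1)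
    (hpn : p ∣ n) (hb : IsCoprime b.content (n : ℤ)) : b.map (Int.castRingHom (ZMod p)) ≠ 0 := by
  rw [Ne, map_intCast_zmod_eq_zero_iff, ← dvd_content_iff_C_dvd]
  intro hdvd
  exact hp (by simpa [Int.isUnit_iff] using hb.isUnit_of_dvd' hdvd (Int.natCast_dvd_natCast.2 hpn))

lemma not_map_intCast_zmod_dvd_of_isCoprime_content {φ b : ℤ[X]} (hφ : φ.Monic)
    (hdeg : b.degree < φ.degree) {n p : ℕ} (hp : p.Prime) (hpn : p ∣ n)
    (hb : IsCoprime b.content (n : ℤ)) :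
    ¬ φ.map (Int.castRingHom (ZMod p)) ∣ b.map (Int.castRingHom (ZMod p)) := by
  have : Fact p.Prime := ⟨hp⟩
  refine (hφ.map _).not_dvd_of_degree_lt
    (map_intCast_zmod_ne_zero_of_isCoprime_content hp.ne_one hpn hb) ?_
  rw [hφ.degree_map]
  exact degree_map_le.trans_lt hdeg

lemma content_dvd_content_of_dvd {R : Type*} [CommRing R] [NormalizedGCDMonoid R] {b c : R[X]}
    (h : b ∣ c) : b.content ∣ c.content :=
  dvd_content_iff_C_dvd.2 ((C_content_dvd b).trans h)

theorem irreducible_map_schurSum {n : ℕ} {φ : ℤ[X]} {a : ℕ → ℤ[X]} (hn : 2 ≤ n) (hφ : φ.Monic)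
    (hirr : ∀ p : ℕ, p.Prime → p ∣ n → Irreducible (φ.map (Int.castRingHom (ZMod p))))
    (han : a n = 1) (hdeg : ∀ i < n, (a i * φ ^ i).degree < (φ ^ n).degree)
    (ha : ∀ p : ℕ, p.Prime → p ∣ n → ∀ i < n,
      ¬ φ.map (Int.castRingHom (ZMod p)) ∣ (a i).map (Int.castRingHom (ZMod p))) :
    Irreducible ((schurSum n a φ).map (Int.castRingHom ℚ)) := by
  have hdegφ : φ.natDegree ≠ 0 := by
    obtain ⟨p, hp, hpn⟩ := Nat.exists_prime_and_dvd (n := n) (by lia)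
    have : Fact p.Prime := ⟨hp⟩
    rw [← hφ.natDegree_map (Int.castRingHom (ZMod p))]
    exact (hirr p hp hpn).natDegree_pos.ne'
  have hdegF : (schurSum n a φ).natDegree = n * φ.natDegree := natDegree_schurSum hφ han hdeg
  have hdeg0 : (schurSum n a φ).natDegree ≠ 0 := by
    rw [hdegF]
    exact mul_ne_zero (by lia) hdegφ
  refine irreducible_map_of_natDegree_dvd_finrank (monic_schurSum hφ han hdeg) hdeg0
    fun K _ _ θ hθ ↦ ?_
  rw [hdegF]
  refine mul_dvd_of_forall_prime_pow_mul_dvd (by lia) fun p k hp hk0 hk ↦ ?_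
  have : Fact p.Prime := ⟨hp⟩
  have hpn : p ∣ n := (dvd_pow_self p hk0).trans hk
  exact pow_mul_natDegree_dvd_finrank hpn hk hφ (hirr p hp hpn) han (ha p hp hpn) hθ

theorem schur_extension_coleman_general (n : ℕ) (hn : 2 ≤ n) (φ : ℤ[X]) (hφmonic : φ.Monic)
    (hφirr : ∀ p : ℕ, p.Prime → p ∣ n → Irreducible (φ.map (Int.castRingHom (ZMod p))))
    (a : ℕ → ℤ[X]) (hdeg : ∀ i < n, (a i * φ ^ i).degree < (φ ^ n).degree)
    (ha : ∀ p : ℕ, p.Prime → p ∣ n → ∀ i < n,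
      ¬ φ.map (Int.castRingHom (ZMod p)) ∣ (a i).map (Int.castRingHom (ZMod p))) :
    Irreducible ((∑ i ∈ Finset.range n,
        C ((n.factorial / i.factorial : ℕ) : ℤ) * a i * φ ^ i
      + φ ^ n).map (Int.castRingHom ℚ)) := by
  have hupdate {i : ℕ} (hi : i < n) : Function.update a n 1 i = a i :=
    Function.update_of_ne hi.ne 1 a
  have hirr : Irreducible ((schurSum n (Function.update a n 1) φ).map (Int.castRingHom ℚ)) :=
    irreducible_map_schurSum hn hφmonic hφirr (Function.update_self n 1 a)
      (fun i hi ↦ (hupdate hi).symm ▸ hdeg i hi)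
      (fun p hp hpn i hi ↦ (hupdate hi).symm ▸ ha p hp hpn i hi)
  simpa only [schurSum_update, schurTerm, map_natCast] using hirr

/-- Let `n ≥ 2` and let `φ ∈ ℤ[x]` be monic and irreducible modulo every prime `p`
dividing `n`. Let `a 0, …, a (n-1) ∈ ℤ[x]` have degree `< deg φ` and assume the content
of the product `∏_{i<n} a i` is coprime with `n`. Then
`∑_{i<n} (n!/i!)·(a i)·φ^i + φ^n` is irreducible over `ℚ`. -/
theorem schur_extension_coleman (n : ℕ) (hn : 2 ≤ n) (φ : ℤ[X]) (hφmonic : φ.Monic)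
    (hφirr : ∀ p : ℕ, p.Prime → p ∣ n → Irreducible (φ.map (Int.castRingHom (ZMod p))))
    (a : ℕ → ℤ[X])
    (hdeg : ∀ i < n, (a i).degree < φ.degree)
    (hcont : IsCoprime ((∏ i ∈ Finset.range n, a i).content) (n : ℤ)) :
    Irreducible ((∑ i ∈ Finset.range n,
        C ((n.factorial / i.factorial : ℕ) : ℤ) * a i * φ ^ i
      + φ ^ n).map (Int.castRingHom ℚ)) := by
  exact schur_extension_coleman_general n hn φ hφmonic hφirr a
    (fun i hi ↦ degree_mul_pow_lt hφmonic (hdeg i hi) hi)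
    fun _ hp hpn i hi ↦ not_map_intCast_zmod_dvd_of_isCoprime_content hφmonic (hdeg i hi) hp hpn
      (hcont.of_isCoprime_of_dvd_left
        (content_dvd_content_of_dvd (Finset.dvd_prod_of_mem a (Finset.mem_range.2 hi))))
end

section
/- (Classical Schönemann Irreducibility Criterion) Let p be a prime and let φ ∈ ℤ[x] be a monic polynomial whose reduction modulo p is irreducible in 𝔽_p[x]. Let n ≥ 1 and let f ∈ ℤ[x] be of the form f(x) = φ(x)^n + p·M(x), where M ∈ ℤ[x] has degree strictly less than n·deg φ. If the reductions of φ and M modulo p are coprime in 𝔽_p[x] (equivalently, since φ is irreducible mod p, the reduction of φ does not divide the reduction of M), then f is irreducible in ℚ[x]. -/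
open Polynomial

/-!
Modulo `π` the polynomial `f = φ ^ n + π M` is the `n`-th power of the irreducible `φ`, while its
remainder on division by `φ` is `π` times that of `M`. The latter is nonzero modulo `π ^ 2` because
`φ` does not divide `M` modulo `π`, so the generalized Eisenstein criterion applies to `f`.
-/

section Semiring

variable {R : Type*} [Semiring R] {φ M : R[X]} {n : ℕ}

theorem degree_C_mul_lt_degree_pow [Nontrivial R] (hφ : φ.Monic)
    (hM : M.degree < ((n * φ.natDegree : ℕ) : WithBot ℕ)) (a : R) :
    (C a * M).degree < (φ ^ n).degree := by
  rw [degree_eq_natDegree (hφ.pow n).ne_zero, hφ.natDegree_pow, ← smul_eq_C_mul]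
  exact (degree_smul_le a M).trans_lt hM

theorem monic_pow_add_C_mul (hφ : φ.Monic)
    (hM : M.degree < ((n * φ.natDegree : ℕ) : WithBot ℕ)) (a : R) :
    (φ ^ n + C a * M).Monic := by
  nontriviality R
  exact (hφ.pow n).add_of_left (degree_C_mul_lt_degree_pow hφ hM a)

theorem natDegree_pow_add_C_mul (hφ : φ.Monic)
    (hM : M.degree < ((n * φ.natDegree : ℕ) : WithBot ℕ)) (a : R) :
    (φ ^ n + C a * M).natDegree = n * φ.natDegree := by
  nontriviality R
  rw [natDegree_add_eq_left_of_degree_lt (degree_C_mul_lt_degree_pow hφ hM a), hφ.natDegree_pow]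

end Semiring

section CommRing

variable {R : Type*} [CommRing R]

theorem pow_add_C_mul_modByMonic {φ : R[X]} (hφ : φ.Monic) {n : ℕ} (hn : n ≠ 0) (a : R)
    (M : R[X]) : (φ ^ n + C a * M) %ₘ φ = C a * (M %ₘ φ) := by
  rw [add_modByMonic, (modByMonic_eq_zero_iff_dvd hφ).2 (dvd_pow_self φ hn), zero_add,
    ← smul_eq_C_mul, smul_modByMonic, smul_eq_C_mul]

theorem map_eq_zero_iff_C_dvd_of_ker_eq_span {S : Type*} [Semiring S] {g : R →+* S} {a : R}
    (hg : RingHom.ker g = Ideal.span {a}) {Q : R[X]} : Q.map g = 0 ↔ C a ∣ Q := by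
  rw [C_dvd_iff_dvd_coeff]
  simp only [← Ideal.mem_span_singleton, ← hg, RingHom.mem_ker, Polynomial.ext_iff, coeff_map,
    coeff_zero]

theorem map_mk_span_sq_C_mul_eq_zero_iff [IsDomain R] {a : R} (ha : a ≠ 0) {Q : R[X]} :
    (C a * Q).map (Ideal.Quotient.mk (Ideal.span {a} ^ 2)) = 0 ↔ C a ∣ Q := by
  rw [Ideal.span_singleton_pow, map_eq_zero_iff_C_dvd_of_ker_eq_span Ideal.mk_ker, C_pow, sq,
    mul_dvd_mul_iff_left (C_ne_zero.2 ha)]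

end CommRing

section Schonemann

variable {R K : Type*} [CommRing R] [IsDomain R] [Field K] [Algebra R K] {π : R} {φ M : R[X]}
  {n : ℕ}

theorem map_mk_sq_pow_add_C_mul_modByMonic_ne_zero (hπ : π ≠ 0)
    (hker : RingHom.ker (algebraMap R K) = Ideal.span {π}) (hφ : φ.Monic) (hn : n ≠ 0)
    (hdvd : ¬ φ.map (algebraMap R K) ∣ M.map (algebraMap R K)) :
    ((φ ^ n + C π * M) %ₘ φ).map
      (Ideal.Quotient.mk (RingHom.ker (algebraMap R K) ^ 2)) ≠ 0 := by
  rwa [pow_add_C_mul_modByMonic hφ hn, hker, Ne, map_mk_span_sq_C_mul_eq_zero_iff hπ,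
    ← map_eq_zero_iff_C_dvd_of_ker_eq_span hker, map_modByMonic _ hφ,
    modByMonic_eq_zero_iff_dvd (hφ.map _)]

theorem irreducible_pow_add_C_mul (hπ : π ≠ 0)
    (hker : RingHom.ker (algebraMap R K) = Ideal.span {π}) (hφ : φ.Monic)
    (hirr : Irreducible (φ.map (algebraMap R K)))
    (hM : M.degree < ((n * φ.natDegree : ℕ) : WithBot ℕ))
    (hdvd : ¬ φ.map (algebraMap R K) ∣ M.map (algebraMap R K)) :
    Irreducible (φ ^ n + C π * M) := by
  have hn : n ≠ 0 := by
    rintro rfl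
    have hM0 : M = 0 := by simpa using hM
    simp [hM0] at hdvd
  have hmonic : (φ ^ n + C π * M).Monic := monic_pow_add_C_mul hφ hM π
  have hdeg : 0 < (φ ^ n + C π * M).natDegree := by
    rw [natDegree_pow_add_C_mul hφ hM, ← hφ.natDegree_map (algebraMap R K)]
    exact Nat.mul_pos (Nat.pos_of_ne_zero hn) hirr.natDegree_pos
  have hπK : algebraMap R K π = 0 := by
    rw [← RingHom.mem_ker, hker]
    exact Ideal.mem_span_singleton_self π
  exact generalizedEisenstein (p := n) hirr hφ hmonic.isPrimitive hdeg
    (by simp [hmonic.leadingCoeff]) (by simp [hmonic.leadingCoeff, hπK])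
    (map_mk_sq_pow_add_C_mul_modByMonic_ne_zero hπ hker hφ hn hdvd)

theorem schonemann_general [IsIntegrallyClosed R] (F : Type*) [Field F] [Algebra R F]
    [IsFractionRing R F] (hπ : π ≠ 0)
    (hker : RingHom.ker (algebraMap R K) = Ideal.span {π}) (hφ : φ.Monic)
    (hirr : Irreducible (φ.map (algebraMap R K)))
    (hM : M.degree < ((n * φ.natDegree : ℕ) : WithBot ℕ))
    (hdvd : ¬ φ.map (algebraMap R K) ∣ M.map (algebraMap R K)) :
    Irreducible ((φ ^ n + C π * M).map (algebraMap R F)) :=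
  (monic_pow_add_C_mul hφ hM π).irreducible_iff_irreducible_map_fraction_map.1
    (irreducible_pow_add_C_mul hπ hker hφ hirr hM hdvd)

end Schonemann

/-- **Classical Schönemann Irreducibility Criterion.** Let `p` be a prime and `φ ∈ ℤ[x]`
monic and irreducible mod `p`. Let `n ≥ 1` and `f = φ^n + p·M` with `deg M < n·deg φ`.
If the reductions mod `p` of `φ` and `M` are coprime in `𝔽_p[x]`, then `f` is irreducible
over `ℚ`. -/
theorem schonemann (p : ℕ) (hp : p.Prime) (φ M : ℤ[X]) (hφmonic : φ.Monic)
    (hφirr : Irreducible (φ.map (Int.castRingHom (ZMod p))))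
    (n : ℕ) (hn : 1 ≤ n)
    (hM : M.degree < ((n * φ.natDegree : ℕ) : WithBot ℕ))
    (hcop : IsCoprime (φ.map (Int.castRingHom (ZMod p)))
                      (M.map (Int.castRingHom (ZMod p)))) :
    Irreducible ((φ ^ n + C (p : ℤ) * M).map (Int.castRingHom ℚ)) := by
  have : Fact p.Prime := ⟨hp⟩
  exact schonemann_general ℚ (Nat.cast_ne_zero.2 hp.ne_zero) (ZMod.ker_intCastRingHom p) hφmonic
    hφirr hM (hφirr.coprime_iff_not_dvd.1 hcop)
end

section
/- (Schur) Let n ≥ 1 be an integer and let a_0, a_1, …, a_n be integers with |a_0| = |a_n| = 1. Then the polynomial Σ_{i=0}^{n} a_i·x^i/i! is irreducible in ℚ[x] (equivalently, the integer polynomial Σ_{i=0}^{n} (n!/i!)·a_i·x^i is irreducible over ℚ). -/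
open Polynomial

/-!
Let `F = n! * ∑ i ≤ n, a i * x ^ i / i!` and suppose that `F` has a factor `A` of degree `k` with
`0 < k ≤ n / 2`. By a theorem of Sylvester some prime `p > k` divides `n (n - 1) ⋯ (n - k + 1)`,
hence every coefficient of `F` of degree at most `n - k`. So `x ^ (n - k + 1)` divides `F` modulo
`p`, while the cofactor of `A` only has degree `n - k`; this forces `p ∣ A(0)`. On the other hand
`v_p(i!) < i / (p - 1)`, so for a suitable radius the `p`-adic Gauss norm of `F` is the absolute
value of its constant coefficient. Gauss norms being multiplicative, the same holds for `A`, and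
comparing with its leading coefficient gives `p ∤ A(0)` because `k < p`.

Sylvester's theorem is proved as in Erdős's proof of Bertrand's postulate: if all prime divisors of
`n.choose k` were at most `k`, then `n.choose k` would be smaller than `(2 n / k) ^ k / (2 k)`.
-/

section Sylvester

open Nat

variable {n k : ℕ}

theorem pow_mul_choose_le_pow_mul_choose {m : ℕ} (hmn : m ≤ n) :
    n ^ k * m.choose k ≤ m ^ k * n.choose k := by
  have descFactorial_le : n ^ k * m.descFactorial k ≤ m ^ k * n.descFactorial k := by
    calc n ^ k * m.descFactorial k = ∏ i ∈ Finset.range k, n * (m - i) := by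
          rw [descFactorial_eq_prod_range, ← Finset.pow_card_mul_prod, Finset.card_range]
      _ ≤ ∏ i ∈ Finset.range k, m * (n - i) := by
          refine Finset.prod_le_prod' fun i _ ↦ ?_
          rw [Nat.mul_sub, Nat.mul_sub, mul_comm m n]
          gcongr
      _ = m ^ k * n.descFactorial k := by
          rw [descFactorial_eq_prod_range, ← Finset.pow_card_mul_prod, Finset.card_range]
  refine Nat.le_of_mul_le_mul_left ?_ k.factorial_pos
  simpa only [descFactorial_eq_factorial_mul_choose, mul_left_comm] using descFactorial_le

theorem two_mul_pow_le_two_mul_self_mul_choose (hk : 0 < k) (hkn : 2 * k ≤ n) :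
    (2 * n) ^ k ≤ 2 * k * (k ^ k * n.choose k) := by
  refine Nat.le_of_mul_le_mul_left ?_ (Nat.two_pow_pos k)
  calc 2 ^ k * (2 * n) ^ k = n ^ k * 4 ^ k := by
        rw [← mul_pow, ← mul_pow]; congr 1; ring
    _ ≤ n ^ k * (2 * k * (2 * k).choose k) := by
        rw [← centralBinom_eq_two_mul_choose]
        gcongr
        exact four_pow_le_two_mul_self_mul_centralBinom k hk
    _ = 2 * k * (n ^ k * (2 * k).choose k) := by ring
    _ ≤ 2 * k * ((2 * k) ^ k * n.choose k) := by
        gcongr 2 * k * ?_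
        exact pow_mul_choose_le_pow_mul_choose hkn
    _ = 2 ^ k * (2 * k * (k ^ k * n.choose k)) := by ring

theorem prod_pow_factorization_choose_le (hn : 0 < n) (s : Finset ℕ) :
    ∏ p ∈ s, p ^ (n.choose k).factorization p ≤ n ^ s.card :=
  Finset.prod_le_pow_card _ _ _ fun _ _ ↦ pow_factorization_choose_le hn

theorem choose_le_pow_primeCounting {M : ℕ} (hn : 0 < n) (hkn : k ≤ n)
    (hM : ∀ p : ℕ, p.Prime → p ∣ n.choose k → p ≤ M) :
    n.choose k ≤ n ^ primeCounting M := by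
  calc n.choose k = ∏ p ∈ (n.choose k).primeFactors, p ^ (n.choose k).factorization p :=
        (prod_factorization_pow_eq_self (choose_ne_zero hkn)).symm
    _ ≤ n ^ (n.choose k).primeFactors.card := prod_pow_factorization_choose_le hn _
    _ ≤ n ^ primeCounting M := by
        rw [← primesLE_card_eq_primeCounting]
        gcongr
        intro p hp
        exact mem_primesLE.mpr ⟨hM p (prime_of_mem_primeFactors hp)
          (dvd_of_mem_primeFactors hp), prime_of_mem_primeFactors hp⟩

theorem choose_le_pow_primeCounting_sqrt_mul_four_pow {M : ℕ} (hn : 0 < n) (hkn : k ≤ n)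
    (hM : ∀ p : ℕ, p.Prime → p ∣ n.choose k → p ≤ M) :
    n.choose k ≤ n ^ primeCounting (sqrt n) * 4 ^ M := by
  set S := (n.choose k).primeFactors
  have prime_of_mem {p : ℕ} (hp : p ∈ S) : p.Prime := prime_of_mem_primeFactors hp
  have prod_small : ∏ p ∈ S with p ≤ sqrt n, p ^ (n.choose k).factorization p
      ≤ n ^ primeCounting (sqrt n) := by
    refine (prod_pow_factorization_choose_le hn _).trans ?_
    rw [← primesLE_card_eq_primeCounting]
    gcongr
    intro p hp
    obtain ⟨hpS, hps⟩ := Finset.mem_filter.mp hp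
    exact mem_primesLE.mpr ⟨hps, prime_of_mem hpS⟩
  have prod_large : ∏ p ∈ S with ¬ p ≤ sqrt n, p ^ (n.choose k).factorization p ≤ 4 ^ M := by
    calc ∏ p ∈ S with ¬ p ≤ sqrt n, p ^ (n.choose k).factorization p
        ≤ ∏ p ∈ S with ¬ p ≤ sqrt n, p := by
          refine Finset.prod_le_prod' fun p hp ↦ ?_
          obtain ⟨hpS, hps⟩ := Finset.mem_filter.mp hp
          have : (n.choose k).factorization p ≤ 1 :=
            factorization_choose_le_one (sqrt_lt'.mp (not_le.mp hps))
          exact (Nat.pow_le_pow_right (prime_of_mem hpS).pos this).trans (pow_one p).le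
      _ ≤ primorial M := by
          refine Finset.prod_le_prod_of_subset_of_one_le' (fun p hp ↦ ?_)
            fun p hp _ ↦ (Finset.mem_filter.mp hp).2.one_le
          have hpS := (Finset.mem_filter.mp hp).1
          exact Finset.mem_filter.mpr ⟨Finset.mem_range_succ_iff.mpr
            (hM p (prime_of_mem hpS) (dvd_of_mem_primeFactors hpS)), prime_of_mem hpS⟩
      _ ≤ 4 ^ M := primorial_le_four_pow M
  calc n.choose k = ∏ p ∈ S, p ^ (n.choose k).factorization p :=
        (prod_factorization_pow_eq_self (choose_ne_zero hkn)).symm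
    _ = _ := (Finset.prod_filter_mul_prod_filter_not S (· ≤ sqrt n) _).symm
    _ ≤ n ^ primeCounting (sqrt n) * 4 ^ M := mul_le_mul' prod_small prod_large

theorem three_mul_primeCounting_lt (hk : 37 ≤ k) : 3 * primeCounting k < k := by
  rcases lt_or_ge k 52 with hk52 | hk52
  · have primeCounting_lt_of_lt_52 : ∀ k < 52, 37 ≤ k → 3 * primeCounting k < k := by
      decide +kernel
    exact primeCounting_lt_of_lt_52 k hk52 hk
  · obtain ⟨m, rfl⟩ := exists_add_of_le hk52
    have add_le := primeCounting_add_le (a := 6) (k := 52) (by norm_num) (by norm_num) m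
    have totient_six : totient 6 = 2 := by decide
    have primeCounting_52 : primeCounting 52 = 15 := by decide +kernel
    rw [totient_six, primeCounting_52] at add_le
    omega

theorem exists_prime_gt_dvd_choose_of_pow_lt (hkn : k ≤ n)
    (h : k ^ k < n ^ (k - primeCounting k)) :
    ∃ p : ℕ, p.Prime ∧ p ∣ n.choose k ∧ k < p := by
  by_contra! hle
  have hk : k ≠ 0 := by rintro rfl; simp at h
  have hn : 0 < n := by omega
  have primeCounting_le : primeCounting k ≤ k := by
    by_contra! hlt
    rw [Nat.sub_eq_zero_of_le hlt.le, pow_zero] at h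
    exact h.not_ge k.pow_self_pos
  have : n ^ k < n ^ k := by
    calc n ^ k = n ^ k * k.choose k := by simp
      _ ≤ k ^ k * n.choose k := pow_mul_choose_le_pow_mul_choose hkn
      _ ≤ k ^ k * n ^ primeCounting k := by
          gcongr
          exact choose_le_pow_primeCounting hn hkn hle
      _ < n ^ (k - primeCounting k) * n ^ primeCounting k := by gcongr
      _ = n ^ k := pow_sub_mul_pow n primeCounting_le
  exact this.false

theorem exists_prime_gt_dvd_choose_of_cube_le_sq (hk : 37 ≤ k) (hkn : k ≤ n)
    (h : k ^ 3 ≤ n ^ 2) : ∃ p : ℕ, p.Prime ∧ p ∣ n.choose k ∧ k < p := by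
  refine exists_prime_gt_dvd_choose_of_pow_lt hkn (lt_of_pow_lt_pow_left₀ 3 (Nat.zero_le _) ?_)
  have := three_mul_primeCounting_lt hk
  calc (k ^ k) ^ 3 = (k ^ 3) ^ k := pow_right_comm k k 3
    _ ≤ (n ^ 2) ^ k := by gcongr
    _ = n ^ (2 * k) := (pow_mul n 2 k).symm
    _ < n ^ ((k - primeCounting k) * 3) := Nat.pow_lt_pow_right (by omega) (by omega)
    _ = (n ^ (k - primeCounting k)) ^ 3 := pow_mul n _ 3

theorem choose_dvd_factorial_pow_log (hkn : k ≤ n)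
    (h : ∀ p : ℕ, p.Prime → p ∣ n.choose k → p ≤ k) : n.choose k ∣ k ! ^ log 2 n := by
  rw [← factorization_prime_le_iff_dvd (choose_ne_zero hkn) (pow_ne_zero _ k.factorial_ne_zero)]
  intro p hp
  rcases em (p ∣ n.choose k) with hdvd | hdvd
  · have one_le : 1 ≤ (k !).factorization p :=
      (hp.dvd_iff_one_le_factorization k.factorial_ne_zero).mp (hp.dvd_factorial.mpr (h p hp hdvd))
    calc (n.choose k).factorization p ≤ log p n := factorization_choose_le_log
      _ ≤ log 2 n := log_anti_left one_lt_two hp.two_le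
      _ ≤ log 2 n * (k !).factorization p := Nat.le_mul_of_pos_right _ one_le
      _ = (k ! ^ log 2 n).factorization p := by
          rw [factorization_pow, Finsupp.smul_apply, smul_eq_mul]
  · rw [factorization_eq_zero_of_not_dvd hdvd]
    exact Nat.zero_le _

theorem exists_prime_gt_dvd_choose_of_lt_37 (hk0 : 0 < k) (hk : k < 37) (hkn : 2 * k ≤ n) :
    ∃ p : ℕ, p.Prime ∧ p ∣ n.choose k ∧ k < p := by
  rcases lt_or_ge n 256 with hn | hn
  · have not_dvd : ∀ k < 37, 0 < k → ∀ n < 256, 2 * k ≤ n → ¬ n.descFactorial k ∣ k ! ^ 8 := by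
      decide +kernel
    by_contra! hle
    refine not_dvd k hk hk0 n hn hkn ?_
    have log_le : log 2 n ≤ 7 := Nat.le_of_lt_succ (log_lt_of_lt_pow (by omega) hn)
    rw [descFactorial_eq_factorial_mul_choose, pow_succ']
    exact mul_dvd_mul_left _
      ((choose_dvd_factorial_pow_log (by omega) hle).trans (pow_dvd_pow _ log_le))
  · have pow_lt : ∀ k < 37, 0 < k → k ^ k < 256 ^ (k - primeCounting k) := by decide +kernel
    refine exists_prime_gt_dvd_choose_of_pow_lt (by omega) ((pow_lt k hk hk0).trans_le ?_)
    gcongr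

theorem prime_of_coprime_factorial (hn1 : 1 < n) (hn : n < (k + 1) ^ 2)
    (h : n.Coprime k !) : n.Prime := by
  by_contra hprime
  have minFac_lt : n.minFac < k + 1 :=
    lt_of_pow_lt_pow_left₀ 2 (Nat.zero_le _) ((minFac_sq_le_self (by omega) hprime).trans_lt hn)
  have minFac_dvd_factorial : n.minFac ∣ k ! :=
    dvd_factorial n.minFac_pos (Nat.le_of_lt_succ minFac_lt)
  exact (minFac_prime hn1.ne').one_lt.ne'
    (Nat.eq_one_of_dvd_coprimes h n.minFac_dvd minFac_dvd_factorial)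

theorem exists_prime_gt_dvd_choose_of_lt_37_sq (hk : 37 ≤ k) (hkn : 2 * k ≤ n) (hn : n < 37 ^ 2) :
    ∃ p : ℕ, p.Prime ∧ p ∣ n.choose k ∧ k < p := by
  -- Coprimality to `36 !` means primality here, and is much cheaper to evaluate in the kernel.
  have exists_coprime : ∀ n ∈ Finset.Ico 74 (37 ^ 2), ∃ l ∈ Finset.range 37,
      (n - l).Coprime (36 !) := by
    decide +kernel
  obtain ⟨l, hl, hcoprime⟩ := exists_coprime n (Finset.mem_Ico.mpr ⟨by omega, hn⟩)
  rw [Finset.mem_range] at hl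
  have prime_sub : (n - l).Prime := prime_of_coprime_factorial (by omega) (by omega) hcoprime
  refine ⟨n - l, prime_sub, ?_, by omega⟩
  have dvd_descFactorial : n - l ∣ n.descFactorial k := by
    rw [descFactorial_eq_prod_range]
    exact Finset.dvd_prod_of_mem _ (Finset.mem_range.mpr (by omega))
  rw [descFactorial_eq_factorial_mul_choose, prime_sub.dvd_mul, prime_sub.dvd_factorial]
    at dvd_descFactorial
  exact dvd_descFactorial.resolve_left (by omega)

theorem le_min_div_three_of_prime_dvd_choose {p : ℕ} (hp : p.Prime) (hdvd : p ∣ n.choose k)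
    (hpk : p ≤ k) (hkn : 2 * k ≤ n) (hn : 6 ≤ n) : p ≤ min k (n / 3) := by
  refine le_min hpk ((Nat.le_div_iff_mul_le three_pos).mpr ?_)
  by_contra! hlt
  have factorization_eq_zero : (n.choose k).factorization p = 0 :=
    factorization_choose_of_lt_three_mul (by omega) hpk (by omega) (by omega)
  have := (hp.dvd_iff_one_le_factorization (choose_ne_zero (by omega))).mp hdvd
  omega

theorem mul_log_two_mul_div_le {M : ℕ} (hk : 0 < k) (hkn : 2 * k ≤ n) (hn : 37 ^ 2 ≤ n)
    (hM : ∀ p : ℕ, p.Prime → p ∣ n.choose k → p ≤ M) :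
    k * Real.log (2 * n / k) ≤ (√n / 3 + 1) * Real.log n + M * Real.log 4 := by
  have hn0 : 0 < n := by omega
  have pow_le : ((2 * n / k : ℝ)) ^ k ≤ n ^ (primeCounting (sqrt n) + 1) * 4 ^ M := by
    rw [div_pow, div_le_iff₀ (by positivity)]
    norm_cast
    calc (2 * n) ^ k ≤ 2 * k * (k ^ k * n.choose k) := two_mul_pow_le_two_mul_self_mul_choose hk hkn
      _ ≤ n * (k ^ k * (n ^ primeCounting (sqrt n) * 4 ^ M)) := by
          gcongr
          exact choose_le_pow_primeCounting_sqrt_mul_four_pow hn0 (by omega) hM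
      _ = n ^ (primeCounting (sqrt n) + 1) * 4 ^ M * k ^ k := by ring
  have primeCounting_le : (primeCounting (sqrt n) : ℝ) ≤ √n / 3 := by
    have lt_sqrt : 3 * primeCounting (sqrt n) < sqrt n :=
      three_mul_primeCounting_lt (le_sqrt'.mpr hn)
    have : (3 * primeCounting (sqrt n) : ℝ) ≤ sqrt n := mod_cast lt_sqrt.le
    linarith [Real.nat_sqrt_le_real_sqrt (a := n)]
  calc k * Real.log (2 * n / k) = Real.log ((2 * n / k : ℝ) ^ k) := (Real.log_pow _ _).symm
    _ ≤ Real.log (n ^ (primeCounting (sqrt n) + 1) * 4 ^ M) :=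
        Real.log_le_log (by positivity) pow_le
    _ = (primeCounting (sqrt n) + 1) * Real.log n + M * Real.log 4 := by
        rw [Real.log_mul (by positivity) (by positivity), Real.log_pow, Real.log_pow]
        push_cast
        rfl
    _ ≤ (√n / 3 + 1) * Real.log n + M * Real.log 4 := by
        gcongr

theorem concaveOn_mul_log_div {c : ℝ} (hc : c ≠ 0) :
    ConcaveOn ℝ (Set.Ici 0) fun x : ℝ ↦ x * Real.log (c / x) := by
  have mul_log_div_eq (x : ℝ) : x * Real.log (c / x) = Real.log c • x + Real.negMulLog x := by
    rcases eq_or_ne x 0 with rfl | hx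
    · simp
    · rw [Real.log_div hc hx, Real.negMulLog, smul_eq_mul]
      ring
  simp only [mul_log_div_eq]
  exact (((LinearMap.lsmul ℝ ℝ (Real.log c)).concaveOn (convex_Ici 0)).add
    Real.concaveOn_negMulLog)

theorem lt_mul_log_div_of_mem_Icc {b c x y z : ℝ} (hc : c ≠ 0) (hx0 : 0 ≤ x)
    (hz : z ∈ Set.Icc x y) (hx : b < x * Real.log (c / x)) (hy : b < y * Real.log (c / y)) :
    b < z * Real.log (c / z) :=
  (lt_min hx hy).trans_le <| (concaveOn_mul_log_div hc).min_le_of_mem_Icc hx0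
    (hx0.trans (hz.1.trans hz.2)) hz

theorem add_one_mul_log_pow_six_lt_pow_six_div_three_mul_log {w : ℝ} (hw : 3 ≤ w) :
    (w ^ 3 / 3 + 1) * Real.log (w ^ 6) < w ^ 6 / 3 * Real.log (3 / 2) := by
  have log_le : Real.log w ≤ 2 / 5 * w := by
    have := Real.log_le_sub_one_of_pos (show 0 < w / Real.exp 1 by positivity)
    rw [Real.log_div (by positivity) (Real.exp_ne_zero 1), Real.log_exp] at this
    have : w / Real.exp 1 ≤ w / (5 / 2) := by
      gcongr
      linarith [Real.exp_one_gt_d9]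
    linarith
  have one_third_le : 1 / 3 ≤ Real.log (3 / 2) := by
    linarith [Real.one_sub_inv_le_log_of_pos (show (0 : ℝ) < 3 / 2 by norm_num)]
  calc (w ^ 3 / 3 + 1) * Real.log (w ^ 6) = (2 * w ^ 3 + 6) * Real.log w := by
        rw [Real.log_pow]; push_cast; ring
    _ ≤ (2 * w ^ 3 + 6) * (2 / 5 * w) := by gcongr
    _ < w ^ 6 / 3 * (1 / 3) := by
        have nine_le : 9 ≤ w ^ 2 := by nlinarith
        have nine_mul_le : 9 * w ^ 4 ≤ w ^ 6 := by nlinarith [show 0 ≤ w ^ 4 by positivity]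
        have mul_le : 27 * w ≤ w ^ 4 := by nlinarith [show 0 ≤ w ^ 3 by positivity]
        nlinarith
    _ ≤ w ^ 6 / 3 * Real.log (3 / 2) := by gcongr

theorem add_one_mul_log_pow_six_lt_pow_four_mul_log {w : ℝ} (hw : 3 ≤ w) :
    (w ^ 3 / 3 + 1) * Real.log (w ^ 6) < w ^ 4 * Real.log (w ^ 2 / 2) := by
  have one_le_log : 1 ≤ Real.log w := by
    rw [Real.le_log_iff_exp_le (by positivity)]
    linarith [Real.exp_one_lt_d9]
  have log_le : Real.log w ≤ Real.log (w ^ 2 / 2) := by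
    rw [Real.log_div (by positivity) two_ne_zero, Real.log_pow]
    push_cast
    linarith [Real.log_two_lt_d9]
  have : 2 * w ^ 3 + 6 < w ^ 4 := by
    nlinarith [show 27 ≤ w ^ 3 by nlinarith [show 9 ≤ w ^ 2 by nlinarith]]
  calc (w ^ 3 / 3 + 1) * Real.log (w ^ 6) = (2 * w ^ 3 + 6) * Real.log w := by
        rw [Real.log_pow]; push_cast; ring
    _ < w ^ 4 * Real.log w := by gcongr
    _ ≤ w ^ 4 * Real.log (w ^ 2 / 2) := by gcongr

theorem add_one_mul_log_pow_six_lt_mul_log {w x : ℝ} (hw : 3 ≤ w) (hwx : w ^ 4 ≤ x)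
    (hxw : x ≤ w ^ 6 / 3) :
    (w ^ 3 / 3 + 1) * Real.log (w ^ 6) < x * Real.log (w ^ 6 / 2 / x) := by
  refine lt_mul_log_div_of_mem_Icc (by positivity) (by positivity) ⟨hwx, hxw⟩ ?_ ?_
  · rw [show w ^ 6 / 2 / w ^ 4 = w ^ 2 / 2 by field_simp]
    exact add_one_mul_log_pow_six_lt_pow_four_mul_log hw
  · rw [show w ^ 6 / 2 / (w ^ 6 / 3) = 3 / 2 by field_simp]
    exact add_one_mul_log_pow_six_lt_pow_six_div_three_mul_log hw

theorem add_one_mul_log_pow_six_add_mul_log_four_lt {w x : ℝ} (hw : 3 ≤ w)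
    (hwx : w ^ 6 / 3 ≤ x) (hxw : x ≤ w ^ 6 / 2) :
    (w ^ 3 / 3 + 1) * Real.log (w ^ 6) + w ^ 6 / 3 * Real.log 4 < x * Real.log (2 * w ^ 6 / x) := by
  have error_lt := add_one_mul_log_pow_six_lt_pow_six_div_three_mul_log hw
  refine lt_mul_log_div_of_mem_Icc (by positivity) (by positivity) ⟨hwx, hxw⟩ ?_ ?_
  · rw [show 2 * w ^ 6 / (w ^ 6 / 3) = 3 / 2 * 4 by field_simp; norm_num,
      Real.log_mul (by norm_num) (by norm_num), mul_add]
    gcongr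
  · have two_mul_log_le : 2 * Real.log (3 / 2) ≤ Real.log 4 := by
      rw [← Nat.cast_two, ← Real.log_pow]
      exact Real.log_le_log (by norm_num) (by norm_num)
    rw [show 2 * w ^ 6 / (w ^ 6 / 2) = 4 by field_simp; norm_num]
    nlinarith [show 0 ≤ w ^ 6 by positivity]

theorem add_one_mul_log_pow_six_add_min_mul_log_four_lt {w x : ℝ} (hw : 3 ≤ w)
    (hwx : w ^ 4 ≤ x) (hxw : x ≤ w ^ 6 / 2) :
    (w ^ 3 / 3 + 1) * Real.log (w ^ 6) + min x (w ^ 6 / 3) * Real.log 4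
      < x * Real.log (2 * w ^ 6 / x) := by
  rcases le_total x (w ^ 6 / 3) with hx3 | hx3
  · have hx : 0 < x := lt_of_lt_of_le (by positivity) hwx
    rw [min_eq_left hx3, show 2 * w ^ 6 / x = w ^ 6 / 2 / x * 4 by ring,
      Real.log_mul (by positivity) (by norm_num), mul_add, add_lt_add_iff_right]
    exact add_one_mul_log_pow_six_lt_mul_log hw hwx hx3
  · rw [min_eq_right hx3]
    exact add_one_mul_log_pow_six_add_mul_log_four_lt hw hx3 hxw

theorem exists_prime_gt_dvd_choose_of_sq_lt_cube (hk : 0 < k) (hkn : 2 * k ≤ n) (hn : 37 ^ 2 ≤ n)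
    (h : n ^ 2 < k ^ 3) : ∃ p : ℕ, p.Prime ∧ p ∣ n.choose k ∧ k < p := by
  by_contra! hle
  obtain ⟨w, hw0, hwn⟩ : ∃ w : ℝ, 0 ≤ w ∧ w ^ 6 = n :=
    ⟨(n : ℝ) ^ ((6 : ℕ) : ℝ)⁻¹, by positivity,
      Real.rpow_inv_natCast_pow n.cast_nonneg (by norm_num)⟩
  have sqrt_eq : √n = w ^ 3 := by
    rw [← hwn, show w ^ 6 = (w ^ 3) ^ 2 by ring, Real.sqrt_sq (by positivity)]
  have hw : 3 ≤ w := by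
    refine le_of_pow_le_pow_left₀ (n := 6) (by norm_num) hw0 ?_
    rw [hwn]
    exact_mod_cast (show 3 ^ 6 ≤ n by omega)
  have hwk : w ^ 4 ≤ k := by
    refine le_of_pow_le_pow_left₀ (n := 3) (by norm_num) k.cast_nonneg ?_
    rw [← pow_mul, pow_mul w 6 2, hwn]
    exact_mod_cast h.le
  have hkw : (k : ℝ) ≤ w ^ 6 / 2 := by
    rw [hwn, le_div_iff₀' two_pos]
    exact_mod_cast hkn
  have upper := mul_log_two_mul_div_le hk hkn hn fun p hp hdvd ↦
    le_min_div_three_of_prime_dvd_choose hp hdvd (hle p hp hdvd) hkn (by omega)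
  have lower := add_one_mul_log_pow_six_add_min_mul_log_four_lt hw hwk hkw
  rw [← sqrt_eq, hwn] at lower
  refine (lower.trans_le upper).not_ge ?_
  gcongr
  push_cast
  gcongr
  exact cast_div_le

theorem exists_prime_gt_dvd_choose (hk : 0 < k) (hkn : 2 * k ≤ n) :
    ∃ p : ℕ, p.Prime ∧ p ∣ n.choose k ∧ k < p := by
  rcases lt_or_ge k 37 with hk37 | hk37
  · exact exists_prime_gt_dvd_choose_of_lt_37 hk hk37 hkn
  rcases lt_or_ge n (37 ^ 2) with hn | hn
  · exact exists_prime_gt_dvd_choose_of_lt_37_sq hk37 hkn hn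
  rcases le_or_gt (k ^ 3) (n ^ 2) with hcube | hcube
  · exact exists_prime_gt_dvd_choose_of_cube_le_sq hk37 (by omega) hcube
  exact exists_prime_gt_dvd_choose_of_sq_lt_cube hk hkn hn hcube

end Sylvester

section ConstantCoeff

theorem dvd_coeff_zero_of_forall_dvd_coeff_mul {R : Type*} [CommRing R] {A B : R[X]} {p : R}
    (hp : Prime p) (hB : ¬ p ∣ B.leadingCoeff)
    (h : ∀ i ≤ B.natDegree, p ∣ (A * B).coeff i) : p ∣ A.coeff 0 := by
  have : (Ideal.span {p}).IsPrime := (Ideal.span_singleton_prime hp.ne_zero).mpr hp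
  let reduction := Ideal.Quotient.mk (Ideal.span {p})
  have reduction_eq_zero {x : R} : reduction x = 0 ↔ p ∣ x := by
    rw [Ideal.Quotient.eq_zero_iff_mem, Ideal.mem_span_singleton]
  have X_pow_dvd : X ^ (B.natDegree + 1) ∣ A.map reduction * B.map reduction := by
    rw [← Polynomial.map_mul, X_pow_dvd_iff]
    intro i hi
    rw [coeff_map, reduction_eq_zero]
    exact h i (Nat.le_of_lt_succ hi)
  by_contra hA
  have not_X_dvd : ¬ X ∣ A.map reduction := by
    rwa [X_dvd_iff, coeff_map, reduction_eq_zero]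
  have X_pow_dvd_right := prime_X.pow_dvd_of_dvd_mul_left _ not_X_dvd X_pow_dvd
  refine hB (reduction_eq_zero.mp ?_)
  rw [leadingCoeff, ← coeff_map]
  exact X_pow_dvd_iff.mp X_pow_dvd_right _ (Nat.lt_succ_self _)

theorem gaussNorm_eq_apply_coeff_zero_of_mul {R : Type*} [Ring R] {v : AbsoluteValue R ℝ}
    (hna : IsNonarchimedean v) {c : ℝ} (hc : 0 < c) {A B : R[X]} (h0 : (A * B).coeff 0 ≠ 0)
    (h : (A * B).gaussNorm v c = v ((A * B).coeff 0)) :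
    A.gaussNorm v c = v (A.coeff 0) := by
  have coeff_zero_le (P : R[X]) : v (P.coeff 0) ≤ P.gaussNorm v c := by
    simpa using P.le_gaussNorm v hc.le 0
  rw [mul_coeff_zero] at h0 h
  rw [gaussNorm_mul hna hc, map_mul] at h
  have hB : 0 < v (B.coeff 0) := v.pos (right_ne_zero_of_mul h0)
  refine le_antisymm (le_of_mul_le_mul_right ?_ hB) (coeff_zero_le A)
  calc A.gaussNorm v c * v (B.coeff 0) ≤ A.gaussNorm v c * B.gaussNorm v c :=
        mul_le_mul_of_nonneg_left (coeff_zero_le B) (A.gaussNorm_nonneg v hc.le)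
    _ = v (A.coeff 0) * v (B.coeff 0) := h

end ConstantCoeff

section PadicAbs

open Nat

variable (p : ℕ) [Fact p.Prime]

/-- The `p`-adic absolute value on `ℤ`, with values in `ℝ` as required by `Polynomial.gaussNorm`. -/
noncomputable def padicAbs : AbsoluteValue ℤ ℝ :=
  (Rat.AbsoluteValue.padic p).comp (f := Int.castRingHom ℚ) (Int.castRingHom ℚ).injective_int

theorem padicAbs_apply (m : ℤ) : padicAbs p m = (padicNorm p m : ℝ) :=
  rfl

theorem isNonarchimedean_padicAbs : IsNonarchimedean (padicAbs p) := fun x y ↦ by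
  simp only [padicAbs_apply]
  exact_mod_cast padicNorm.nonarchimedean (p := p) (q := x) (r := y)

variable {p}

theorem padicAbs_le_one (m : ℤ) : padicAbs p m ≤ 1 :=
  Rat.AbsoluteValue.padic_le_one p m

theorem padicAbs_eq_one_iff {m : ℤ} : padicAbs p m = 1 ↔ ¬ (p : ℤ) ∣ m := by
  rw [padicAbs_apply, ← padicNorm.int_eq_one_iff]
  norm_cast

theorem padicAbs_natCast {m : ℕ} (hm : m ≠ 0) :
    padicAbs p m = (p : ℝ)⁻¹ ^ padicValNat p m := by
  rw [padicAbs_apply, Int.cast_natCast, padicNorm.eq_zpow_of_nonzero (cast_ne_zero.mpr hm),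
    padicValRat.of_nat, zpow_neg, zpow_natCast, inv_pow]
  push_cast
  rfl

theorem padicAbs_le_inv_of_dvd {m : ℤ} (h : (p : ℤ) ∣ m) : padicAbs p m ≤ (p : ℝ)⁻¹ := by
  obtain ⟨t, rfl⟩ := h
  rw [map_mul, padicAbs_natCast (Fact.out : p.Prime).ne_zero, padicValNat_self, pow_one]
  exact mul_le_of_le_one_right (by positivity) (padicAbs_le_one t)

variable (p) in
theorem exists_pow_le_padicAbs_factorial_and_inv_lt_pow (n : ℕ) :
    ∃ c : ℝ, 0 < c ∧ (∀ i ≤ n, c ^ i ≤ padicAbs p i !) ∧ ∀ k < p, (p : ℝ)⁻¹ < c ^ k := by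
  have two_le : 2 ≤ p := (Fact.out : p.Prime).two_le
  have inv_pos : 0 < (p : ℝ)⁻¹ := by positivity
  have inv_lt_one : (p : ℝ)⁻¹ < 1 := inv_lt_one_of_one_lt₀ (by exact_mod_cast two_le)
  -- `c` lies slightly above `p ^ (-1 / (p - 1))`, the radius of convergence of the `p`-adic `exp`:
  -- at that radius itself the second claim would fail for `k = p - 1`.
  set m := (n + 1) * (p - 1) with hm
  have m_ne_zero : m ≠ 0 := mul_ne_zero n.succ_ne_zero (by omega)
  obtain ⟨c, c_pos, c_pow⟩ : ∃ c : ℝ, 0 < c ∧ c ^ m = (p : ℝ)⁻¹ ^ n :=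
    ⟨((p : ℝ)⁻¹ ^ n) ^ (m : ℝ)⁻¹, by positivity,
      Real.rpow_inv_natCast_pow (by positivity) m_ne_zero⟩
  refine ⟨c, c_pos, fun i hi ↦ ?_, fun k hk ↦ ?_⟩
  · rw [padicAbs_natCast i.factorial_ne_zero]
    refine le_of_pow_le_pow_left₀ m_ne_zero (by positivity) ?_
    rw [pow_right_comm, c_pow, ← pow_mul, ← pow_mul]
    refine pow_le_pow_of_le_one inv_pos.le inv_lt_one.le ?_
    rcases eq_or_ne i 0 with rfl | hi0
    · simp
    · have legendre := sub_one_mul_padicValNat_factorial_lt_of_ne_zero p hi0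
      calc padicValNat p i ! * m = (n + 1) * ((p - 1) * padicValNat p i !) := by rw [hm]; ring
        _ ≤ (n + 1) * (i - 1) := by gcongr; omega
        _ ≤ n * i := by
            obtain ⟨j, rfl⟩ := exists_eq_add_one_of_ne_zero hi0
            rw [Nat.add_sub_cancel]
            linarith
  · refine lt_of_pow_lt_pow_left₀ m (by positivity) ?_
    rw [pow_right_comm, c_pow, ← pow_mul]
    refine pow_lt_pow_right_of_lt_one₀ inv_pos inv_lt_one ?_
    calc n * k ≤ n * (p - 1) := by gcongr; omega
      _ < m := by rw [hm]; gcongr <;> omega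

end PadicAbs

section SchurPolynomial

open Nat

/-- The polynomial `n! * ∑ i ≤ n, a i * x ^ i / i!`, whose coefficients are integers because
`n! / i! = n.descFactorial (n - i)`. -/
noncomputable def schurPolynomial (a : ℕ → ℤ) (n : ℕ) : ℤ[X] :=
  ∑ i ∈ Finset.range (n + 1), C (a i * n.descFactorial (n - i)) * X ^ i

variable {a : ℕ → ℤ} {n : ℕ}

theorem coeff_schurPolynomial {i : ℕ} (hi : i ≤ n) :
    (schurPolynomial a n).coeff i = a i * n.descFactorial (n - i) := by
  simp only [schurPolynomial, finsetSum_coeff, coeff_C_mul_X_pow, Finset.sum_ite_eq,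
    Finset.mem_range_succ_iff, hi, if_true]

theorem coeff_zero_schurPolynomial : (schurPolynomial a n).coeff 0 = a 0 * n ! := by
  rw [coeff_schurPolynomial n.zero_le, Nat.sub_zero, descFactorial_self]

theorem coeff_self_schurPolynomial : (schurPolynomial a n).coeff n = a n := by
  rw [coeff_schurPolynomial le_rfl, Nat.sub_self, descFactorial_zero, cast_one, mul_one]

theorem natDegree_schurPolynomial_le : (schurPolynomial a n).natDegree ≤ n :=
  natDegree_sum_le_of_forall_le _ _ fun i hi ↦
    (natDegree_C_mul_X_pow_le _ i).trans (Finset.mem_range_succ_iff.mp hi)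

theorem natDegree_schurPolynomial (hn : a n ≠ 0) : (schurPolynomial a n).natDegree = n :=
  natDegree_eq_of_le_of_coeff_ne_zero natDegree_schurPolynomial_le
    (coeff_self_schurPolynomial.trans_ne hn)

theorem monic_schurPolynomial (hn : a n = 1) : (schurPolynomial a n).Monic := by
  rw [Monic, leadingCoeff, natDegree_schurPolynomial (hn.trans_ne one_ne_zero),
    coeff_self_schurPolynomial, hn]

theorem schurPolynomial_smul (m : ℤ) : schurPolynomial (m • a) n = C m * schurPolynomial a n := by
  simp only [schurPolynomial, Finset.mul_sum, Pi.smul_apply, smul_eq_mul, mul_assoc, C_mul]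

theorem factorial_mul_descFactorial_sub {i : ℕ} (hi : i ≤ n) :
    i ! * n.descFactorial (n - i) = n ! := by
  simpa only [Nat.sub_sub_self hi] using factorial_mul_descFactorial (n.sub_le i)

theorem map_schurPolynomial : (schurPolynomial a n).map (algebraMap ℤ ℚ) =
    C (n ! : ℚ) * ∑ i ∈ Finset.range (n + 1), C ((a i : ℚ) / (i ! : ℚ)) * X ^ i := by
  simp only [schurPolynomial, Polynomial.map_sum, Finset.mul_sum]
  refine Finset.sum_congr rfl fun i hi ↦ ?_
  have coeff_eq : (a i * n.descFactorial (n - i) : ℚ) = n ! * (a i / i !) := by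
    rw [← factorial_mul_descFactorial_sub (Finset.mem_range_succ_iff.mp hi)]
    push_cast
    field_simp
  rw [← mul_assoc, ← C_mul, ← coeff_eq]
  simp

theorem dvd_coeff_schurPolynomial {p k i : ℕ} (hp : p ∣ n.choose k) (hik : i + k ≤ n) :
    (p : ℤ) ∣ (schurPolynomial a n).coeff i := by
  rw [coeff_schurPolynomial (by omega)]
  refine Dvd.dvd.mul_left (Int.natCast_dvd_natCast.mpr ?_) _
  calc p ∣ n.descFactorial k :=
        hp.trans (descFactorial_eq_factorial_mul_choose n k ▸ Nat.dvd_mul_left _ _)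
    _ ∣ n.descFactorial (n - i) := by
        rw [← descFactorial_mul_descFactorial (show k ≤ n - i by omega)]
        exact Nat.dvd_mul_left _ _

theorem gaussNorm_schurPolynomial {p : ℕ} [Fact p.Prime] (h0 : ¬ (p : ℤ) ∣ a 0) {c : ℝ}
    (hc0 : 0 < c) (hc : ∀ i ≤ n, c ^ i ≤ padicAbs p i !) :
    (schurPolynomial a n).gaussNorm (padicAbs p) c
      = padicAbs p ((schurPolynomial a n).coeff 0) := by
  set F := schurPolynomial a n
  refine le_antisymm ?_ (by simpa using F.le_gaussNorm (padicAbs p) hc0.le 0)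
  obtain ⟨i, hi⟩ := F.exists_eq_gaussNorm (padicAbs p) c
  rw [hi]
  rcases lt_or_ge n i with hni | hin
  · rw [coeff_eq_zero_of_natDegree_lt (natDegree_schurPolynomial_le.trans_lt hni), map_zero,
      zero_mul]
    exact AbsoluteValue.nonneg _ _
  calc padicAbs p (F.coeff i) * c ^ i
      = padicAbs p (a i) * (c ^ i * padicAbs p (n.descFactorial (n - i))) := by
        rw [coeff_schurPolynomial hin, map_mul]
        ring
    _ ≤ 1 * (padicAbs p i ! * padicAbs p (n.descFactorial (n - i))) := by
        gcongr
        · exact padicAbs_le_one _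
        · exact hc i hin
    _ = padicAbs p (F.coeff 0) := by
        rw [coeff_zero_schurPolynomial, map_mul, padicAbs_eq_one_iff.mpr h0, ← map_mul,
          ← Nat.cast_mul, factorial_mul_descFactorial_sub hin]

theorem not_dvd_coeff_zero_of_mul_eq_schurPolynomial {p : ℕ} [Fact p.Prime] {A B : ℤ[X]}
    (hAB : A * B = schurPolynomial a n) (h0 : ¬ (p : ℤ) ∣ a 0)
    (hA : ¬ (p : ℤ) ∣ A.leadingCoeff) (hdeg : A.natDegree < p) : ¬ (p : ℤ) ∣ A.coeff 0 := by
  intro hdvd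
  obtain ⟨c, c_pos, pow_le, inv_lt⟩ := exists_pow_le_padicAbs_factorial_and_inv_lt_pow p n
  have coeff_zero_ne_zero : (A * B).coeff 0 ≠ 0 := by
    rw [hAB, coeff_zero_schurPolynomial]
    exact mul_ne_zero (fun ha0 ↦ h0 (ha0 ▸ dvd_zero _)) (cast_ne_zero.mpr n.factorial_ne_zero)
  have gaussNorm_eq : A.gaussNorm (padicAbs p) c = padicAbs p (A.coeff 0) :=
    gaussNorm_eq_apply_coeff_zero_of_mul (isNonarchimedean_padicAbs p) c_pos coeff_zero_ne_zero
      (hAB ▸ gaussNorm_schurPolynomial h0 c_pos pow_le)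
  refine lt_irrefl (p : ℝ)⁻¹ ?_
  calc (p : ℝ)⁻¹ < c ^ A.natDegree := inv_lt _ hdeg
    _ = padicAbs p A.leadingCoeff * c ^ A.natDegree := by
        rw [padicAbs_eq_one_iff.mpr hA, one_mul]
    _ ≤ A.gaussNorm (padicAbs p) c := A.le_gaussNorm _ c_pos.le _
    _ = padicAbs p (A.coeff 0) := gaussNorm_eq
    _ ≤ (p : ℝ)⁻¹ := padicAbs_le_inv_of_dvd hdvd

theorem irreducible_schurPolynomial_of_eq_one (hn : 0 < n) (h0 : IsUnit (a 0)) (han : a n = 1) :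
    Irreducible (schurPolynomial a n) := by
  have natDegree_eq : (schurPolynomial a n).natDegree = n :=
    natDegree_schurPolynomial (han.trans_ne one_ne_zero)
  have monic := monic_schurPolynomial han
  have ne_one : schurPolynomial a n ≠ 1 := fun h ↦ by
    rw [h, natDegree_one] at natDegree_eq
    exact hn.ne natDegree_eq
  rw [monic.irreducible_iff_lt_natDegree_lt ne_one]
  rintro A hA hdeg ⟨B, hAB⟩
  rw [natDegree_eq, Finset.mem_Ioc] at hdeg
  have hB : B.Monic := hA.of_mul_monic_left (hAB ▸ monic)
  have natDegree_B : B.natDegree = n - A.natDegree := by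
    rw [← natDegree_eq, hAB, hA.natDegree_mul hB, Nat.add_sub_cancel_left]
  obtain ⟨p, hp, dvd_choose, hAp⟩ := exists_prime_gt_dvd_choose (n := n) hdeg.1 (by omega)
  have : Fact p.Prime := ⟨hp⟩
  have prime_p : Prime (p : ℤ) := Nat.prime_iff_prime_int.mp hp
  have not_dvd_leadingCoeff {P : ℤ[X]} (hP : P.Monic) : ¬ (p : ℤ) ∣ P.leadingCoeff :=
    hP.leadingCoeff ▸ prime_p.not_dvd_one
  refine not_dvd_coeff_zero_of_mul_eq_schurPolynomial hAB.symm
    (fun h ↦ prime_p.not_isUnit (isUnit_of_dvd_unit h h0)) (not_dvd_leadingCoeff hA) hAp ?_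
  refine dvd_coeff_zero_of_forall_dvd_coeff_mul prime_p (not_dvd_leadingCoeff hB) fun i hi ↦ ?_
  rw [← hAB]
  exact dvd_coeff_schurPolynomial dvd_choose (by omega)

theorem irreducible_map_schurPolynomial (hn : 0 < n) (h0 : IsUnit (a 0)) (han : IsUnit (a n)) :
    Irreducible ((schurPolynomial a n).map (algebraMap ℤ ℚ)) := by
  have smul_eq_one : (a n • a) n = 1 := Int.isUnit_mul_self han
  have irreducible_smul := irreducible_schurPolynomial_of_eq_one hn (han.mul h0) smul_eq_one
  rwa [(monic_schurPolynomial smul_eq_one).irreducible_iff_irreducible_map_fraction_map (K := ℚ),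
    schurPolynomial_smul, Polynomial.map_mul, map_C,
    irreducible_isUnit_mul (isUnit_C.mpr (han.map (algebraMap ℤ ℚ)))] at irreducible_smul

end SchurPolynomial

/-- **Schur's theorem.** Let `n ≥ 1` and let `a 0, …, a n` be integers with
`|a 0| = |a n| = 1`. Then `∑_{i≤n} (a i)·x^i/i!` is irreducible over `ℚ`. -/
theorem schur (n : ℕ) (hn : 1 ≤ n) (a : ℕ → ℤ)
    (h0 : (a 0).natAbs = 1) (hnatop : (a n).natAbs = 1) :
    Irreducible (∑ i ∈ Finset.range (n + 1),
      C ((a i : ℚ) / (i.factorial : ℚ)) * X ^ i) := by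
  have irreducible_map := irreducible_map_schurPolynomial hn (Int.isUnit_iff_natAbs_eq.mpr h0)
    (Int.isUnit_iff_natAbs_eq.mpr hnatop)
  have isUnit_C : IsUnit (C (n.factorial : ℚ)) :=
    isUnit_C.mpr (Nat.cast_ne_zero.mpr n.factorial_ne_zero).isUnit
  rwa [map_schurPolynomial, irreducible_isUnit_mul isUnit_C] at irreducible_map
end
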